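/- Dichotomy for entire Chern–Simons vortices. Let m ∈ ℕ and let w be a function that is smooth on ℝ² ∖ {0}, such that x ↦ w(x) − 2m ln|x| extends to a smooth function on ℝ², Δw + e^w(1 − e^w) = 0 on ℝ² ∖ {0}, and the function e^w(1 − e^w) is integrable on ℝ². Set β := −2m + (1/2π)∫_{ℝ²} e^{w(x)}(1 − e^{w(x)}) dx. Then either w(x) → 0 as |x| → ∞, or the function x ↦ w(x) + β ln|x| is bounded on {x ∈ ℝ² : |x| ≥ 1}. -/

import Mathlib

/-!
Write `w = v + 2m log |x|` with `v` smooth. The density `g = e^w (1 - e^w)` extends continuously to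
the plane and `-Δv = g` everywhere. A comparison with the barrier `-2 log (R² - |x - x₀|²)` on large
disks gives `w ≤ 0` (`dens_le_one`), hence `0 ≤ g ≤ 1`, and `v` is bounded above.

The potential theory rests on averages of `v` over disks, with weight `(1 - |y|²)₊²`. By integration
by parts the average at scale `s` has derivative `-mass / s`, where `mass` is the smoothed amount of
`g` in the disk (`hasDerivAt_avg`). The masses about two centres differ by `O(|x - x'| / s)`, and the
difference of the averages vanishes as `s → ∞` because `v` is bounded above and its averages decay
at most logarithmically. Integrating from infinity, moving the centre of an average by a distance
comparable to `s` costs `O(1)` (`IsPotential.abs_avg_sub_le`). This replaces the representation of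
`v` by a logarithmic potential, and it yields the uniform continuity of `v`, the lower bound
`v ≥ -M log |x| - C` with `M = (1 / 2π) ∫ g`, the upper bound `v ≤ -(M - ε) log |x| + C`, and, if `g`
decays fast enough, the sharp upper bound `v ≤ -M log |x| + C`.

Since `w` is uniformly continuous near infinity and `g` is integrable, `g → 0` at infinity. Thus `w`
eventually avoids every compact interval of negative numbers, and as the exterior of a disk is
connected, `w` stays on one side of `[-2, -1]` (`side_of_gap`). If `w > -1`, then `w → 0`. If
`w < -2`, then `g ≥ e^w / 2`, and the lower bound `w ≥ -β log |x| - C` with the integrability of `g`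
forces `β > 2` (`two_lt_of_side`). The rough upper bound now gives `g = O(|x|^(-2-δ))` for some
`δ > 0`, so the sharp upper bound applies (`bounded_of_side`).
-/

open MeasureTheory Real Filter Metric Set

noncomputable section

/-- The plane `ℝ²`. -/
abbrev R2 : Type := EuclideanSpace ℝ (Fin 2)

/-- The Laplacian `Δf = ∂²f/∂x₁² + ∂²f/∂x₂²`. -/
def lap (f : R2 → ℝ) (x : R2) : ℝ :=
  ∑ i : Fin 2,
    fderiv ℝ (fun y => fderiv ℝ f y (EuclideanSpace.single i 1)) x (EuclideanSpace.single i 1)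

open Classical in
/-- `e^w`, extended by `0` at the origin. -/
def Fw (w : R2 → ℝ) (x : R2) : ℝ := if x = 0 then 0 else Real.exp (w x)

/-! ### The cut-off profile -/

/-- The truncated paraboloid `(1 - |y|²)₊`. -/
def cone (y : R2) : ℝ := max 0 (1 - ‖y‖ ^ 2)

lemma cone_nonneg (y : R2) : 0 ≤ cone y := le_max_left _ _

lemma cone_le_one (y : R2) : cone y ≤ 1 := max_le zero_le_one (by nlinarith [sq_nonneg ‖y‖])

lemma cone_eq_zero {y : R2} (hy : 1 ≤ ‖y‖) : cone y = 0 :=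
  max_eq_left (by nlinarith [norm_nonneg y])

@[fun_prop]
lemma continuous_cone : Continuous cone := by unfold cone; fun_prop

lemma hasCompactSupport_cone : HasCompactSupport cone :=
  HasCompactSupport.intro (isCompact_closedBall (0 : R2) 1) fun y hy => by
    apply cone_eq_zero
    simp only [mem_closedBall, dist_zero_right, not_le] at hy
    exact hy.le

lemma hasCompactSupport_cone_pow {n : ℕ} (hn : n ≠ 0) :
    HasCompactSupport (fun y => cone y ^ n) :=
  hasCompactSupport_cone.comp_left (g := fun t : ℝ => t ^ n) (by simp [hn])

lemma abs_cone_sub_le (y z : R2) : |cone y - cone z| ≤ 2 * ‖y - z‖ := by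
  have h : |‖y‖ - ‖z‖| ≤ ‖y - z‖ := abs_norm_sub_norm_le y z
  have hy := norm_nonneg y
  have hz := norm_nonneg z
  unfold cone
  rw [abs_le] at h
  rw [abs_le]
  rcases le_total ‖y‖ 1 with h1 | h1 <;> rcases le_total ‖z‖ 1 with h2 | h2
  · rw [max_eq_right (by nlinarith), max_eq_right (by nlinarith)]
    constructor <;> nlinarith
  · rw [max_eq_right (by nlinarith), max_eq_left (by nlinarith)]
    constructor <;> nlinarith
  · rw [max_eq_left (by nlinarith), max_eq_right (by nlinarith)]
    constructor <;> nlinarith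
  · rw [max_eq_left (by nlinarith), max_eq_left (by nlinarith)]
    constructor <;> linarith [norm_nonneg (y - z)]

lemma abs_cone_sq_sub_le (y z : R2) : |cone y ^ 2 - cone z ^ 2| ≤ 4 * ‖y - z‖ := by
  have h := abs_cone_sub_le y z
  have e : cone y ^ 2 - cone z ^ 2 = (cone y + cone z) * (cone y - cone z) := by ring
  have := cone_nonneg y; have := cone_nonneg z
  have := cone_le_one y; have := cone_le_one z
  rw [e, abs_mul, abs_of_nonneg (by positivity)]
  nlinarith [abs_nonneg (cone y - cone z)]

lemma abs_cone_cube_sub_le (y z : R2) : |cone y ^ 3 - cone z ^ 3| ≤ 6 * ‖y - z‖ := by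
  have h := abs_cone_sub_le y z
  have e : cone y ^ 3 - cone z ^ 3 =
      (cone y ^ 2 + cone y * cone z + cone z ^ 2) * (cone y - cone z) := by ring
  have hy := cone_nonneg y; have hz := cone_nonneg z
  have hy1 := cone_le_one y; have hz1 := cone_le_one z
  rw [e, abs_mul, abs_of_nonneg (by positivity)]
  have : cone y ^ 2 + cone y * cone z + cone z ^ 2 ≤ 3 := by nlinarith
  nlinarith [abs_nonneg (cone y - cone z), norm_nonneg (y - z)]

lemma hasDerivAt_posPart_cube (t : ℝ) :
    HasDerivAt (fun t : ℝ => max 0 t ^ 3) (3 * max 0 t ^ 2) t := by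
  rcases lt_trichotomy t 0 with ht | rfl | ht
  · rw [max_eq_left ht.le]
    have : (fun t : ℝ => max 0 t ^ 3) =ᶠ[nhds t] fun _ => 0 := by
      filter_upwards [Iio_mem_nhds ht] with u hu
      rw [max_eq_left (le_of_lt hu)]; simp
    simpa using (hasDerivAt_const t (0 : ℝ)).congr_of_eventuallyEq this
  · rw [hasDerivAt_iff_isLittleO]
    simp only [max_self, sub_zero]
    have : (fun u : ℝ => u ^ 2) =o[nhds 0] fun u : ℝ => u := by
      simpa using Asymptotics.isLittleO_pow_pow (𝕜 := ℝ) (show 1 < 2 by norm_num)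
    refine Asymptotics.IsBigO.trans_isLittleO ?_ this
    refine Asymptotics.IsBigO.of_bound 1 ?_
    filter_upwards [Iio_mem_nhds (show (0 : ℝ) < 1 by norm_num)] with u hu
    simp only [mem_Iio] at hu
    simp only [Real.norm_eq_abs]
    rcases le_total u 0 with h | h
    · rw [max_eq_left h]; simp; positivity
    · rw [max_eq_right h]
      simp
      rw [abs_of_nonneg h]
      nlinarith [mul_nonneg h h]
  · rw [max_eq_right ht.le]
    have : (fun t : ℝ => max 0 t ^ 3) =ᶠ[nhds t] fun u => u ^ 3 := by
      filter_upwards [Ioi_mem_nhds ht] with u hu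
      rw [max_eq_right (le_of_lt hu)]
    simpa using (hasDerivAt_pow 3 t).congr_of_eventuallyEq this

/-- The squared profile is the radial antiderivative of the cubed one:
`∇ (1 - |y|²)₊³ = -6 (1 - |y|²)₊² y`. -/
lemma hasFDerivAt_cone_cube (y : R2) :
    HasFDerivAt (fun y => cone y ^ 3) (-(6 * cone y ^ 2) • innerSL ℝ y) y := by
  have h1 : HasFDerivAt (fun y : R2 => 1 - ‖y‖ ^ 2) (-(2 • innerSL ℝ y)) y := by
    simpa using (hasStrictFDerivAt_norm_sq y).hasFDerivAt.const_sub 1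
  have h2 := (hasDerivAt_posPart_cube (1 - ‖y‖ ^ 2)).comp_hasFDerivAt y h1
  refine h2.congr_fderiv ?_
  ext z
  simp [cone]
  ring

lemma fderiv_cone_cube (y : R2) (i : Fin 2) :
    fderiv ℝ (fun y => cone y ^ 3) y (EuclideanSpace.single i 1) = -(6 * cone y ^ 2) * y i := by
  rw [(hasFDerivAt_cone_cube y).fderiv]
  simp [EuclideanSpace.inner_single_right]

lemma integrable_cone_pow_mul {n : ℕ} (hn : n ≠ 0) {f : R2 → ℝ} (hf : Continuous f) :
    Integrable (fun y => cone y ^ n * f y) := by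
  apply Continuous.integrable_of_hasCompactSupport
  · fun_prop
  · exact (hasCompactSupport_cone_pow hn).mul_right

lemma integrable_cone_pow {n : ℕ} (hn : n ≠ 0) : Integrable (fun y => cone y ^ n) := by
  simpa using integrable_cone_pow_mul hn (f := fun _ => 1) continuous_const

lemma integral_cone_sq : ∫ y, cone y ^ 2 = π / 3 := by
  have h := integral_fun_norm_addHaar (volume : Measure R2) (fun r : ℝ => (max 0 (1 - r ^ 2)) ^ 2)
  have hv : (volume : Measure R2).real (ball 0 1) = π := by
    rw [measureReal_def, EuclideanSpace.volume_ball_fin_two]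
    simp [pi_pos.le]
  have h1 : ∫ y in Ioi (0 : ℝ), y ^ (2 - 1) • (max 0 (1 - y ^ 2)) ^ 2 = 1 / 6 := by
    have e : ∫ y in Ioi (0 : ℝ), y ^ (2 - 1) • (max 0 (1 - y ^ 2)) ^ 2
        = ∫ y in Ioc (0 : ℝ) 1, y * (1 - y ^ 2) ^ 2 := by
      rw [← integral_indicator measurableSet_Ioi, ← integral_indicator measurableSet_Ioc]
      congr 1
      ext y
      simp only [indicator, mem_Ioi, mem_Ioc]
      by_cases h0 : 0 < y
      · by_cases h1 : y ≤ 1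
        · simp only [h0, h1, and_self, if_true]
          rw [max_eq_right (by nlinarith)]; simp
        · push Not at h1
          simp only [h0, h1.not_ge, and_false, if_true, if_false]
          rw [max_eq_left (by nlinarith)]; simp
      · simp [h0]
    rw [e, ← intervalIntegral.integral_of_le zero_le_one]
    have e2 : ∀ y : ℝ, y * (1 - y ^ 2) ^ 2 = y - 2 * y ^ 3 + y ^ 5 := fun y => by ring
    simp_rw [e2]
    rw [intervalIntegral.integral_add
      ((by fun_prop : Continuous fun y : ℝ => y - 2 * y ^ 3).intervalIntegrable 0 1)
      ((by fun_prop : Continuous fun y : ℝ => y ^ 5).intervalIntegrable 0 1),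
      intervalIntegral.integral_sub ((by fun_prop : Continuous fun y : ℝ => y).intervalIntegrable 0 1)
      ((by fun_prop : Continuous fun y : ℝ => 2 * y ^ 3).intervalIntegrable 0 1),
      intervalIntegral.integral_const_mul]
    simp
    norm_num
  have hd : Module.finrank ℝ R2 = 2 := by simp
  rw [hv, hd, h1] at h
  have : ∫ y, cone y ^ 2 = ∫ x : R2, (max 0 (1 - ‖x‖ ^ 2)) ^ 2 := rfl
  rw [this, h]
  simp
  ring

/-! ### Weighted averages and the flux identity -/

/-- The average of `v` over the disk of radius `s` about `x`, with weight proportional to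
`(1 - |y|²)₊²`; the constant `3 / π` normalizes the weight, so that `avg v x 0 = v x`. -/
def avg (v : R2 → ℝ) (x : R2) (s : ℝ) : ℝ := (3 / π) * ∫ y, cone y ^ 2 * v (x + s • y)

/-- The smoothed amount of `g`, divided by `2π`, in the disk of radius `s` about `x`. -/
def mass (g : R2 → ℝ) (x : R2) (s : ℝ) : ℝ :=
  (1 / (2 * π)) * ∫ z, cone (s⁻¹ • (z - x)) ^ 3 * g z

lemma avg_zero (v : R2 → ℝ) (x : R2) : avg v x 0 = v x := by
  simp only [avg, zero_smul, add_zero]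
  rw [integral_mul_const, integral_cone_sq]
  field_simp

lemma mass_eq (g : R2 → ℝ) (x : R2) {s : ℝ} (hs : 0 < s) :
    mass g x s = s ^ 2 / (2 * π) * ∫ y, cone y ^ 3 * g (x + s • y) := by
  have h1 := Measure.integral_comp_smul (volume : Measure R2)
    (fun z => cone (s⁻¹ • z) ^ 3 * g (x + z)) s
  have h2 := integral_add_left_eq_self (μ := (volume : Measure R2))
    (fun z => cone (s⁻¹ • (z - x)) ^ 3 * g z) x
  have hd : Module.finrank ℝ R2 = 2 := by simp
  simp only [add_sub_cancel_left] at h2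
  simp only [smul_smul, inv_mul_cancel₀ hs.ne', one_smul, hd, smul_eq_mul] at h1
  rw [abs_of_pos (by positivity), h2] at h1
  rw [h1, mass]
  field_simp

lemma contDiff_fderiv_apply {v : R2 → ℝ} (hv : ContDiff ℝ 2 v) (e : R2) :
    ContDiff ℝ 1 (fun y => fderiv ℝ v y e) :=
  (hv.fderiv_right (m := 1) (by norm_num)).clm_apply contDiff_const

lemma continuous_lap {v : R2 → ℝ} (hv : ContDiff ℝ 2 v) : Continuous (lap v) := by
  unfold lap
  refine continuous_finsetSum _ fun i _ => ?_
  exact ((contDiff_fderiv_apply hv _).continuous_fderiv (by norm_num)).clm_apply continuous_const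

/-- Integration by parts against the profile, in one coordinate direction. -/
lemma integral_cone_sq_mul_coord {h : R2 → ℝ} (hh : ContDiff ℝ 1 h) (x : R2) (s : ℝ) (i : Fin 2) :
    ∫ y, cone y ^ 2 * (y i * h (x + s • y)) =
      s / 6 * ∫ y, cone y ^ 3 * fderiv ℝ h (x + s • y) (EuclideanSpace.single i 1) := by
  have hd : ∀ y : R2, fderiv ℝ (fun y => h (x + s • y)) y (EuclideanSpace.single i 1) =
      s * fderiv ℝ h (x + s • y) (EuclideanSpace.single i 1) := by
    intro y
    have h1 : HasFDerivAt (fun y : R2 => x + s • y) (s • ContinuousLinearMap.id ℝ R2) y :=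
      ((hasFDerivAt_id y).const_smul s).const_add x
    have h2 := ((hh.differentiable (by norm_num)) (x + s • y)).hasFDerivAt.comp y h1
    have h3 := h2.fderiv
    simp only [Function.comp_def] at h3
    rw [h3]; simp
  have hc : Continuous fun y : R2 => h (x + s • y) := hh.continuous.comp (by fun_prop)
  have hc' : Continuous fun y : R2 => fderiv ℝ h (x + s • y) (EuclideanSpace.single i 1) :=
    ((hh.continuous_fderiv (by norm_num)).comp (by fun_prop)).clm_apply continuous_const
  have key := integral_mul_fderiv_eq_neg_fderiv_mul_of_integrable (μ := (volume : Measure R2))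
    (f := fun y => cone y ^ 3) (g := fun y => h (x + s • y))
    (v := EuclideanSpace.single i 1)
    (by
      simp only [fderiv_cone_cube]
      have := integrable_cone_pow_mul two_ne_zero
        (f := fun y : R2 => -6 * (y i * h (x + s • y))) (by fun_prop)
      refine this.congr (ae_of_all _ fun y => ?_)
      ring)
    (by
      simp only [hd]
      exact integrable_cone_pow_mul three_ne_zero (by fun_prop))
    (integrable_cone_pow_mul three_ne_zero hc)
    (fun y _ => (hasFDerivAt_cone_cube y).differentiableAt)
    (fun y _ => (hh.differentiable (by norm_num)).differentiableAt.comp y (by fun_prop))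
  simp only [hd, fderiv_cone_cube] at key
  have e1 : ∀ y : R2, cone y ^ 3 * (s * fderiv ℝ h (x + s • y) (EuclideanSpace.single i 1)) =
      s * (cone y ^ 3 * fderiv ℝ h (x + s • y) (EuclideanSpace.single i 1)) := fun y => by ring
  have e2 : ∀ y : R2, -(6 * cone y ^ 2) * y i * h (x + s • y) =
      -6 * (cone y ^ 2 * (y i * h (x + s • y))) := fun y => by ring
  simp only [e1, e2, integral_const_mul] at key
  linarith

/-- The derivative of the average in the radius is a weighted integral of the Laplacian. -/
lemma hasDerivAt_avg {v : R2 → ℝ} (hv : ContDiff ℝ 2 v) (x : R2) (s : ℝ) :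
    HasDerivAt (avg v x) (s / (2 * π) * ∫ y, cone y ^ 3 * lap v (x + s • y)) s := by
  have hvd : Differentiable ℝ v := hv.differentiable (by norm_num)
  have hv' : Continuous (fderiv ℝ v) := hv.continuous_fderiv (by norm_num)
  -- a bound for the gradient on the disk that contains all points `x + t • y` in play
  obtain ⟨C, hC⟩ := (isCompact_closedBall x (|s| + 1)).exists_bound_of_continuousOn
    hv'.continuousOn
  have hder := hasDerivAt_integral_of_dominated_loc_of_deriv_le (μ := (volume : Measure R2))
    (𝕜 := ℝ) (F := fun t y => cone y ^ 2 * v (x + t • y))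
    (F' := fun t y => cone y ^ 2 * fderiv ℝ v (x + t • y) y) (x₀ := s)
    (s := ball s 1) (bound := fun y => cone y ^ 2 * C) (ball_mem_nhds s one_pos)
    (Eventually.of_forall fun t => (by
      have := hv.continuous
      fun_prop : Continuous fun y => cone y ^ 2 * v (x + t • y)).aestronglyMeasurable)
    (integrable_cone_pow_mul two_ne_zero (hv.continuous.comp (by fun_prop)))
    (((continuous_cone.pow 2).mul
      ((hv'.comp (by fun_prop)).clm_apply continuous_id)).aestronglyMeasurable)
    (ae_of_all _ fun y t ht => by
      rcases le_total 1 ‖y‖ with hy | hy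
      · simp [cone_eq_zero hy]
      have hmem : x + t • y ∈ closedBall x (|s| + 1) := by
        simp only [mem_closedBall, dist_self_add_left, norm_smul, Real.norm_eq_abs]
        rw [mem_ball, Real.dist_eq] at ht
        have : |t| ≤ |s| + 1 := by
          have := abs_sub_abs_le_abs_sub t s
          linarith
        nlinarith [abs_nonneg t, norm_nonneg y]
      rw [norm_mul, Real.norm_of_nonneg (by positivity)]
      gcongr
      calc ‖fderiv ℝ v (x + t • y) y‖ ≤ ‖fderiv ℝ v (x + t • y)‖ * ‖y‖ :=
            ContinuousLinearMap.le_opNorm _ _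
        _ ≤ ‖fderiv ℝ v (x + t • y)‖ * 1 := by gcongr
        _ ≤ C := by rw [mul_one]; exact hC _ hmem)
    (integrable_cone_pow_mul two_ne_zero continuous_const)
    (ae_of_all _ fun y t _ => by
      have h1 : HasDerivAt (fun t : ℝ => x + t • y) y t := by
        simpa using ((hasDerivAt_id t).smul_const y).const_add x
      have h2 := (hvd (x + t • y)).hasFDerivAt.comp_hasDerivAt t h1
      exact h2.const_mul (cone y ^ 2))
  have hder2 := hder.2.const_mul (3 / π)
  refine hder2.congr_deriv ?_
  have e1 : ∀ y : R2, cone y ^ 2 * fderiv ℝ v (x + s • y) y =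
      ∑ i : Fin 2, cone y ^ 2 *
        (y i * fderiv ℝ v (x + s • y) (EuclideanSpace.single i 1)) := by
    intro y
    have hy : y = ∑ i : Fin 2, y i • (EuclideanSpace.single i (1 : ℝ) : R2) := by
      ext j; fin_cases j <;> simp
    rw [← Finset.mul_sum]
    congr 1
    calc fderiv ℝ v (x + s • y) y
        = fderiv ℝ v (x + s • y) (∑ i : Fin 2, y i • (EuclideanSpace.single i (1 : ℝ) : R2)) :=
          congrArg _ hy
      _ = _ := by simp only [map_sum, map_smul, smul_eq_mul]
  have e2 : ∀ y : R2, cone y ^ 3 * lap v (x + s • y) = ∑ i : Fin 2, cone y ^ 3 *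
      fderiv ℝ (fun z => fderiv ℝ v z (EuclideanSpace.single i 1)) (x + s • y)
        (EuclideanSpace.single i 1) := by
    intro y
    rw [lap, Finset.mul_sum]
  have hi1 : ∀ i ∈ (Finset.univ : Finset (Fin 2)), Integrable (fun y : R2 => cone y ^ 2 *
        (y i * fderiv ℝ v (x + s • y) (EuclideanSpace.single i 1))) := fun i _ =>
    integrable_cone_pow_mul two_ne_zero
      ((by fun_prop : Continuous fun y : R2 => y i).mul
        ((hv'.comp (by fun_prop)).clm_apply continuous_const))
  have hi2 : ∀ i ∈ (Finset.univ : Finset (Fin 2)), Integrable (fun y : R2 => cone y ^ 3 *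
      fderiv ℝ (fun z => fderiv ℝ v z (EuclideanSpace.single i 1)) (x + s • y)
        (EuclideanSpace.single i 1)) := fun i _ =>
    integrable_cone_pow_mul three_ne_zero
      (((((contDiff_fderiv_apply hv _).continuous_fderiv (by norm_num))).comp
        (by fun_prop : Continuous fun y : R2 => x + s • y)).clm_apply continuous_const)
  simp only [e1, e2]
  rw [integral_finsetSum _ hi1, integral_finsetSum _ hi2, Finset.mul_sum, Finset.mul_sum]
  refine Finset.sum_congr rfl fun i _ => ?_
  rw [integral_cone_sq_mul_coord (contDiff_fderiv_apply hv _)]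
  ring

/-! ### Averages of a logarithmic potential -/

/-- The standing assumptions on the regular part `v` of the vortex function: it is bounded above
and satisfies `-Δv = g` with an integrable density `0 ≤ g ≤ 1`. -/
structure IsPotential (v g : R2 → ℝ) (C₀ : ℝ) : Prop where
  smooth : ContDiff ℝ 2 v
  lap_eq : ∀ x, lap v x = -g x
  nonneg : ∀ x, 0 ≤ g x
  le_one : ∀ x, g x ≤ 1
  integrable : Integrable g
  le : ∀ x, v x ≤ C₀

/-- The total mass `(1 / 2π) ∫ g`. -/
def tot (g : R2 → ℝ) : ℝ := (1 / (2 * π)) * ∫ z, g z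

lemma le_of_hasDerivAt_nonneg {f f' : ℝ → ℝ} {a b : ℝ} (hab : a ≤ b)
    (hc : ContinuousOn f (Icc a b)) (hd : ∀ s ∈ Ioo a b, HasDerivAt f (f' s) s)
    (h : ∀ s ∈ Ioo a b, 0 ≤ f' s) : f a ≤ f b := by
  have := monotoneOn_of_deriv_nonneg (convex_Icc a b) hc
    (by rw [interior_Icc]; exact fun s hs => (hd s hs).differentiableAt.differentiableWithinAt)
    (by rw [interior_Icc]; exact fun s hs => by rw [(hd s hs).deriv]; exact h s hs)
  exact this (left_mem_Icc.2 hab) (right_mem_Icc.2 hab) hab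

namespace IsPotential

variable {v g : R2 → ℝ} {C₀ : ℝ}

lemma continuous_density (P : IsPotential v g C₀) : Continuous g := by
  have : g = fun x => -lap v x := by ext x; rw [P.lap_eq]; ring
  rw [this]
  exact (continuous_lap P.smooth).neg

lemma integrable_mass (P : IsPotential v g C₀) (x : R2) (s : ℝ) :
    Integrable fun z => cone (s⁻¹ • (z - x)) ^ 3 * g z := by
  refine P.integrable.mono' ?_ (ae_of_all _ fun z => ?_)
  · have := P.continuous_density
    exact (by fun_prop : Continuous fun z => cone (s⁻¹ • (z - x)) ^ 3 * g z).aestronglyMeasurable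
  · rw [Real.norm_of_nonneg (mul_nonneg (pow_nonneg (cone_nonneg _) _) (P.nonneg z))]
    exact mul_le_of_le_one_left (P.nonneg z) (pow_le_one₀ (cone_nonneg _) (cone_le_one _))

lemma mass_nonneg (P : IsPotential v g C₀) (x : R2) (s : ℝ) : 0 ≤ mass g x s :=
  mul_nonneg (by positivity)
    (integral_nonneg fun z => mul_nonneg (pow_nonneg (cone_nonneg _) _) (P.nonneg z))

lemma tot_nonneg (P : IsPotential v g C₀) : 0 ≤ tot g :=
  mul_nonneg (by positivity) (integral_nonneg P.nonneg)

lemma mass_le_tot (P : IsPotential v g C₀) (x : R2) (s : ℝ) : mass g x s ≤ tot g := by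
  refine mul_le_mul_of_nonneg_left ?_ (by positivity)
  refine integral_mono (P.integrable_mass x s) P.integrable fun z => ?_
  exact mul_le_of_le_one_left (P.nonneg z) (pow_le_one₀ (cone_nonneg _) (cone_le_one _))

lemma mass_mono (P : IsPotential v g C₀) (x : R2) {s t : ℝ} (hs : 0 < s) (hst : s ≤ t) :
    mass g x s ≤ mass g x t := by
  refine mul_le_mul_of_nonneg_left ?_ (by positivity)
  refine integral_mono (P.integrable_mass x s) (P.integrable_mass x t) fun z => ?_
  refine mul_le_mul_of_nonneg_right ?_ (P.nonneg z)
  have : cone (s⁻¹ • (z - x)) ≤ cone (t⁻¹ • (z - x)) := by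
    unfold cone
    refine max_le_max le_rfl (sub_le_sub_left ?_ 1)
    rw [norm_smul, norm_smul, Real.norm_of_nonneg (inv_nonneg.2 hs.le),
      Real.norm_of_nonneg (inv_nonneg.2 (hs.le.trans hst))]
    have : t⁻¹ ≤ s⁻¹ := inv_anti₀ hs hst
    have ht : 0 ≤ t⁻¹ := inv_nonneg.2 (hs.le.trans hst)
    gcongr
  exact pow_le_pow_left₀ (cone_nonneg _) this 3

/-- At scale `s`, the smoothed mass is Lipschitz in its centre with constant `O(1 / s)`. -/
lemma abs_mass_sub_le (P : IsPotential v g C₀) (x x' : R2) {s : ℝ} (hs : 0 < s) :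
    |mass g x s - mass g x' s| ≤ 6 * tot g * ‖x - x'‖ / s := by
  rw [mass, mass, ← mul_sub, ← integral_sub (P.integrable_mass x s) (P.integrable_mass x' s),
    abs_mul, abs_of_pos (by positivity : 0 < 1 / (2 * π))]
  have h : |∫ z, (cone (s⁻¹ • (z - x)) ^ 3 * g z - cone (s⁻¹ • (z - x')) ^ 3 * g z)| ≤
      ∫ z, 6 * (‖x - x'‖ / s) * g z := by
    rw [← Real.norm_eq_abs]
    refine norm_integral_le_of_norm_le (P.integrable.const_mul _) (ae_of_all _ fun z => ?_)
    rw [← sub_mul, norm_mul, Real.norm_of_nonneg (P.nonneg z)]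
    refine mul_le_mul_of_nonneg_right ?_ (P.nonneg z)
    refine (abs_cone_cube_sub_le _ _).trans (le_of_eq ?_)
    rw [← smul_sub, norm_smul, Real.norm_of_nonneg (by positivity), sub_sub_sub_cancel_left,
      norm_sub_rev]
    field_simp
  rw [integral_const_mul] at h
  calc 1 / (2 * π) * |∫ z, (cone (s⁻¹ • (z - x)) ^ 3 * g z - cone (s⁻¹ • (z - x')) ^ 3 * g z)|
      ≤ 1 / (2 * π) * (6 * (‖x - x'‖ / s) * ∫ z, g z) := by gcongr
    _ = _ := by rw [tot]; ring

lemma integral_cone_cube_le : ∫ y, cone y ^ 3 ≤ π / 3 := by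
  rw [← integral_cone_sq]
  exact integral_mono (integrable_cone_pow three_ne_zero) (integrable_cone_pow two_ne_zero)
    fun y => pow_le_pow_of_le_one (cone_nonneg y) (cone_le_one y) (by norm_num)

lemma mass_le_sq (P : IsPotential v g C₀) (x : R2) {s B : ℝ} (hs : 0 < s)
    (hB : ∀ z, ‖z - x‖ ≤ s → g z ≤ B) : mass g x s ≤ B * s ^ 2 := by
  have hB0 : 0 ≤ B := (P.nonneg x).trans (hB x (by simpa using hs.le))
  rw [mass_eq g x hs]
  have h : ∫ y, cone y ^ 3 * g (x + s • y) ≤ ∫ y, cone y ^ 3 * B := by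
    have := P.continuous_density
    refine integral_mono (integrable_cone_pow_mul three_ne_zero (by fun_prop))
      (integrable_cone_pow_mul three_ne_zero continuous_const) fun y => ?_
    rcases le_total 1 ‖y‖ with hy | hy
    · simp [cone_eq_zero hy]
    · refine mul_le_mul_of_nonneg_left (hB _ ?_) (pow_nonneg (cone_nonneg _) _)
      rw [add_sub_cancel_left, norm_smul, Real.norm_of_nonneg hs.le]
      nlinarith
  rw [integral_mul_const] at h
  have h2 : ∫ y, cone y ^ 3 * g (x + s • y) ≤ π / 3 * B :=
    h.trans (mul_le_mul_of_nonneg_right integral_cone_cube_le hB0)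
  calc s ^ 2 / (2 * π) * ∫ y, cone y ^ 3 * g (x + s • y)
      ≤ s ^ 2 / (2 * π) * (π / 3 * B) := by gcongr
    _ = B * s ^ 2 / 6 := by field_simp; ring
    _ ≤ B * s ^ 2 := by nlinarith [mul_nonneg hB0 (sq_nonneg s)]

/-- The disks of radius `s` about `x` and `0` are disjoint, so they share the total mass. -/
lemma mass_add_mass_le (P : IsPotential v g C₀) {x : R2} {s : ℝ} (hs : 0 < s)
    (hx : 2 * s ≤ ‖x‖) : mass g x s + mass g 0 s ≤ tot g := by
  rw [mass, mass, tot, ← mul_add, ← integral_add (P.integrable_mass x s) (P.integrable_mass 0 s)]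
  refine mul_le_mul_of_nonneg_left ?_ (by positivity)
  refine integral_mono ((P.integrable_mass x s).add (P.integrable_mass 0 s)) P.integrable
    fun z => ?_
  rw [← add_mul]
  refine mul_le_of_le_one_left (P.nonneg z) ?_
  have hnorm : ∀ u : R2, ‖s⁻¹ • u‖ = ‖u‖ / s := fun u => by
    rw [norm_smul, Real.norm_of_nonneg (by positivity)]; field_simp
  have hle : ∀ u : R2, cone u ^ 3 ≤ 1 := fun u => pow_le_one₀ (cone_nonneg _) (cone_le_one _)
  rcases le_total s ‖z‖ with h | h
  · rw [sub_zero, cone_eq_zero (y := s⁻¹ • z) (by rw [hnorm, one_le_div hs]; exact h)]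
    simpa using hle _
  · have : s ≤ ‖z - x‖ := by
      have := norm_sub_norm_le x z
      rw [norm_sub_rev] at this
      linarith
    rw [cone_eq_zero (y := s⁻¹ • (z - x)) (by rw [hnorm, one_le_div hs]; exact this)]
    simpa using hle _

lemma tendsto_mass (P : IsPotential v g C₀) :
    Tendsto (fun s => mass g 0 s) atTop (nhds (tot g)) := by
  refine Tendsto.const_mul _ ?_
  refine tendsto_integral_filter_of_dominated_convergence g
    (Eventually.of_forall fun s => (P.integrable_mass 0 s).aestronglyMeasurable)
    (Eventually.of_forall fun s => ae_of_all _ fun z => ?_) P.integrable (ae_of_all _ fun z => ?_)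
  · rw [Real.norm_of_nonneg (mul_nonneg (pow_nonneg (cone_nonneg _) _) (P.nonneg z))]
    exact mul_le_of_le_one_left (P.nonneg z) (pow_le_one₀ (cone_nonneg _) (cone_le_one _))
  · have h1 : Tendsto (fun s : ℝ => s⁻¹ • (z - 0)) atTop (nhds 0) := by
      simpa using (tendsto_inv_atTop_zero (𝕜 := ℝ)).smul_const (z - 0)
    have h2 := ((continuous_cone.tendsto 0).comp h1).pow 3
    have h3 : cone 0 = 1 := by simp [cone]
    rw [h3] at h2
    simpa using h2.mul_const (g z)

lemma hasDerivAt (P : IsPotential v g C₀) (x : R2) {s : ℝ} (hs : 0 < s) :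
    HasDerivAt (avg v x) (-(mass g x s / s)) s := by
  refine (hasDerivAt_avg P.smooth x s).congr_deriv ?_
  rw [mass_eq g x hs]
  simp only [P.lap_eq, mul_neg, integral_neg]
  field_simp

lemma continuous_avg (P : IsPotential v g C₀) (x : R2) : Continuous (avg v x) :=
  continuous_iff_continuousAt.2 fun s => (hasDerivAt_avg P.smooth x s).continuousAt

lemma avg_anti (P : IsPotential v g C₀) (x : R2) {a b : ℝ} (ha : 0 ≤ a) (hab : a ≤ b) :
    avg v x b ≤ avg v x a := by
  have := le_of_hasDerivAt_nonneg (f := fun s => -avg v x s) hab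
    (P.continuous_avg x).neg.continuousOn
    (fun s hs => (P.hasDerivAt x (ha.trans_lt hs.1)).neg)
    (fun s hs => by
      have := P.mass_nonneg x s
      have : 0 < s := ha.trans_lt hs.1
      rw [neg_neg]; positivity)
  linarith

lemma avg_le_add_log (P : IsPotential v g C₀) (x : R2) {a b K : ℝ} (ha : 0 < a) (hab : a ≤ b)
    (hK : ∀ s ∈ Ioo a b, mass g x s ≤ K) :
    avg v x a ≤ avg v x b + K * (Real.log b - Real.log a) := by
  have := le_of_hasDerivAt_nonneg (f := fun s => avg v x s + K * Real.log s) hab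
    ((P.continuous_avg x).continuousOn.add (continuousOn_const.mul
      (Real.continuousOn_log.mono fun s hs => (ha.trans_le hs.1).ne')))
    (fun s hs => (P.hasDerivAt x (ha.trans hs.1)).add
      ((Real.hasDerivAt_log (ha.trans hs.1).ne').const_mul K))
    (fun s hs => by
      have h1 := hK s hs
      have : 0 < s := ha.trans hs.1
      have e : -(mass g x s / s) + K * s⁻¹ = (K - mass g x s) / s := by field_simp; ring
      rw [e]
      exact div_nonneg (by linarith) this.le)
  linarith

lemma avg_add_log_le (P : IsPotential v g C₀) (x : R2) {a b K : ℝ} (ha : 0 < a) (hab : a ≤ b)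
    (hK : ∀ s ∈ Ioo a b, K ≤ mass g x s) :
    avg v x b + K * (Real.log b - Real.log a) ≤ avg v x a := by
  have := le_of_hasDerivAt_nonneg (f := fun s => -(avg v x s + K * Real.log s)) hab
    ((P.continuous_avg x).continuousOn.add (continuousOn_const.mul
      (Real.continuousOn_log.mono fun s hs => (ha.trans_le hs.1).ne'))).neg
    (fun s hs => ((P.hasDerivAt x (ha.trans hs.1)).add
      ((Real.hasDerivAt_log (ha.trans hs.1).ne').const_mul K)).neg)
    (fun s hs => by
      have h1 := hK s hs
      have : 0 < s := ha.trans hs.1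
      have e : -(-(mass g x s / s) + K * s⁻¹) = (mass g x s - K) / s := by field_simp; ring
      rw [e]
      exact div_nonneg (by linarith) this.le)
  linarith

/-- Where `g ≤ B`, the mass at scale `s` is at most `B s²`, so `avg v x` has decreased by at most
`B b² / 2` on reaching scale `b`. -/
lemma le_avg_add_sq (P : IsPotential v g C₀) (x : R2) {b B : ℝ} (hb : 0 ≤ b)
    (hB : ∀ z, ‖z - x‖ ≤ b → g z ≤ B) : v x ≤ avg v x b + B * b ^ 2 / 2 := by
  have := le_of_hasDerivAt_nonneg (f := fun s => avg v x s + B * s ^ 2 / 2) hb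
    ((P.continuous_avg x).continuousOn.add (by fun_prop))
    (fun s hs => (P.hasDerivAt x hs.1).add
      (((hasDerivAt_pow 2 s).const_mul B).div_const 2))
    (fun s hs => by
      have h1 := P.mass_le_sq x hs.1 (fun z hz => hB z (hz.trans hs.2.le))
      have h0 : 0 < s := hs.1
      have e : -(mass g x s / s) + B * (((2 : ℕ) : ℝ) * s ^ (2 - 1)) / 2 =
        (B * s ^ 2 - mass g x s) / s := by push_cast; field_simp; ring
      rw [e]
      exact div_nonneg (by linarith) h0.le)
  simpa [avg_zero] using this

lemma avg_le (P : IsPotential v g C₀) (x : R2) {s : ℝ} (hs : 0 ≤ s) : avg v x s ≤ C₀ := by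
  have := P.avg_anti x le_rfl hs
  rw [avg_zero] at this
  exact this.trans (P.le x)

/-- The nonnegative function `C₀ - v` has averages of comparable size over comparable disks, and
its averages grow only logarithmically; moving the centre at scale `R` therefore costs
`O(log R / R)`. -/
lemma abs_avg_sub_avg_zero_le (P : IsPotential v g C₀) (x : R2) {R : ℝ} (hR : 1 ≤ R)
    (hx : ‖x‖ ≤ R) : |avg v x R - avg v 0 R| ≤
      128 * ‖x‖ / R * (C₀ - avg v 0 1 + tot g * Real.log (4 * R)) := by
  have hR0 : 0 < R := by linarith
  set q : R2 → ℝ := fun z => C₀ - v z with hq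
  have hq0 : ∀ z, 0 ≤ q z := fun z => sub_nonneg.2 (P.le z)
  have hqc : Continuous q := continuous_const.sub P.smooth.continuous
  have havg : ∀ (z : R2) (s : ℝ), avg v z s = C₀ - (3 / π) * ∫ y, cone y ^ 2 * q (z + s • y) := by
    intro z s
    have hvc := P.smooth.continuous
    have e : ∀ y, cone y ^ 2 * q (z + s • y) = cone y ^ 2 * C₀ - cone y ^ 2 * v (z + s • y) :=
      fun y => by simp only [hq]; ring
    simp only [e]
    rw [integral_sub (integrable_cone_pow_mul two_ne_zero continuous_const)
      (integrable_cone_pow_mul two_ne_zero (by fun_prop)), integral_mul_const, integral_cone_sq,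
      avg]
    field_simp
    ring
  -- recentring the average at `x` moves the weight instead of the function
  have h1 : ∫ y, cone y ^ 2 * q (x + R • y) = ∫ y, cone (y - R⁻¹ • x) ^ 2 * q (R • y) := by
    have := integral_sub_right_eq_self (μ := (volume : Measure R2))
      (fun y => cone y ^ 2 * q (x + R • y)) (R⁻¹ • x)
    rw [← this]
    congr 1
    ext y
    rw [smul_sub, smul_smul, mul_inv_cancel₀ hR0.ne', one_smul, add_sub_cancel]
  have h4 : ∫ y, cone ((4 : ℝ)⁻¹ • y) ^ 2 * q (R • y) =
      16 * ∫ y, cone y ^ 2 * q (0 + (4 * R) • y) := by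
    have := Measure.integral_comp_smul (volume : Measure R2)
      (fun y => cone ((4 : ℝ)⁻¹ • y) ^ 2 * q (R • y)) 4
    have hd : Module.finrank ℝ R2 = 2 := by simp
    simp only [smul_smul, hd, smul_eq_mul] at this
    norm_num at this
    simp only [zero_add, mul_comm (4 : ℝ) R, this]
    ring_nf
  have hi1 : Integrable fun y => cone (y - R⁻¹ • x) ^ 2 * q (R • y) := by
    apply Continuous.integrable_of_hasCompactSupport (by fun_prop)
    refine HasCompactSupport.mul_right ?_
    exact (hasCompactSupport_cone_pow two_ne_zero).comp_homeomorph (Homeomorph.subRight (R⁻¹ • x))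
  have hi2 : Integrable fun y => cone y ^ 2 * q (R • y) :=
    integrable_cone_pow_mul two_ne_zero (by fun_prop)
  have hi3 : Integrable fun y => cone ((4 : ℝ)⁻¹ • y) ^ 2 * q (R • y) := by
    apply Continuous.integrable_of_hasCompactSupport (by fun_prop)
    refine HasCompactSupport.mul_right ?_
    exact (hasCompactSupport_cone_pow two_ne_zero).comp_homeomorph
      (Homeomorph.smulOfNeZero (4 : ℝ)⁻¹ (by norm_num))
  have h2 : |∫ y, (cone (y - R⁻¹ • x) ^ 2 * q (R • y) - cone y ^ 2 * q (R • y))| ≤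
      ∫ y, 8 * (‖x‖ / R) * (cone ((4 : ℝ)⁻¹ • y) ^ 2 * q (R • y)) := by
    rw [← Real.norm_eq_abs]
    refine norm_integral_le_of_norm_le (hi3.const_mul _) (ae_of_all _ fun y => ?_)
    rw [← sub_mul, norm_mul, Real.norm_of_nonneg (hq0 _), ← mul_assoc]
    refine mul_le_mul_of_nonneg_right ?_ (hq0 _)
    have hxR : ‖R⁻¹ • x‖ = ‖x‖ / R := by
      rw [norm_smul, Real.norm_of_nonneg (by positivity)]; field_simp
    rcases le_total ‖y‖ 2 with hy | hy
    · -- on the disk of radius `2` the wide weight is at least `9/16`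
      have h5 := abs_cone_sq_sub_le (y - R⁻¹ • x) y
      rw [sub_sub_cancel_left, norm_neg, hxR] at h5
      have h6 : 3 / 4 ≤ cone ((4 : ℝ)⁻¹ • y) := by
        refine le_trans ?_ (le_max_right _ _)
        rw [norm_smul, Real.norm_of_nonneg (by norm_num)]
        nlinarith [norm_nonneg y]
      have h7 : 1 / 2 ≤ cone ((4 : ℝ)⁻¹ • y) ^ 2 := by nlinarith
      have : 0 ≤ ‖x‖ / R := by positivity
      rw [Real.norm_eq_abs]
      nlinarith
    · have h5 : 1 ≤ ‖y - R⁻¹ • x‖ := by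
        have := norm_sub_norm_le y (R⁻¹ • x)
        have h8 : ‖x‖ / R ≤ 1 := (div_le_one hR0).2 hx
        rw [hxR] at this
        linarith
      rw [cone_eq_zero h5, cone_eq_zero (by linarith : 1 ≤ ‖y‖)]
      simp
      positivity
  rw [integral_sub hi1 hi2, integral_const_mul, h4] at h2
  have h9 : C₀ - avg v 0 (4 * R) ≤ C₀ - avg v 0 1 + tot g * Real.log (4 * R) := by
    have := P.avg_le_add_log 0 one_pos (by linarith : 1 ≤ 4 * R)
      (fun s _ => P.mass_le_tot 0 s)
    rw [Real.log_one] at this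
    linarith
  have h10 : (3 / π) * ∫ y, cone y ^ 2 * q (0 + (4 * R) • y) = C₀ - avg v 0 (4 * R) := by
    rw [havg]; ring
  rw [havg x R, havg 0 R, h1]
  simp only [zero_add]
  have hp : 0 < 3 / π := by positivity
  calc |C₀ - 3 / π * (∫ y, cone (y - R⁻¹ • x) ^ 2 * q (R • y)) -
        (C₀ - 3 / π * ∫ y, cone y ^ 2 * q (R • y))|
      = (3 / π) * |(∫ y, cone (y - R⁻¹ • x) ^ 2 * q (R • y)) - ∫ y, cone y ^ 2 * q (R • y)| := by
        rw [← abs_of_pos hp, ← abs_mul, abs_of_pos hp, ← abs_neg]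
        congr 1; ring
    _ ≤ (3 / π) * (8 * (‖x‖ / R) * (16 * ∫ y, cone y ^ 2 * q (0 + (4 * R) • y))) := by gcongr
    _ = 128 * ‖x‖ / R * ((3 / π) * ∫ y, cone y ^ 2 * q (0 + (4 * R) • y)) := by ring
    _ ≤ _ := by rw [h10]; gcongr

lemma tendsto_avg_sub_avg_zero (P : IsPotential v g C₀) (x : R2) :
    Tendsto (fun R => avg v x R - avg v 0 R) atTop (nhds 0) := by
  have hlim : Tendsto (fun R : ℝ =>
      128 * ‖x‖ / R * (C₀ - avg v 0 1 + tot g * Real.log (4 * R))) atTop (nhds 0) := by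
    have h1 : Tendsto (fun R : ℝ => R⁻¹) atTop (nhds 0) := tendsto_inv_atTop_zero
    have h2 : Tendsto (fun R : ℝ => Real.log R / R) atTop (nhds 0) := by
      simpa using Real.tendsto_pow_log_div_mul_add_atTop 1 0 1 one_ne_zero
    have h3 := (h1.const_mul (128 * ‖x‖ * (C₀ - avg v 0 1 + tot g * Real.log 4))).add
      (h2.const_mul (128 * ‖x‖ * tot g))
    simp only [mul_zero, add_zero] at h3
    refine h3.congr' ?_
    filter_upwards [eventually_gt_atTop 0] with R hR
    rw [Real.log_mul (by norm_num) hR.ne']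
    field_simp
    ring
  refine squeeze_zero_norm' ?_ hlim
  filter_upwards [eventually_ge_atTop 1, eventually_ge_atTop ‖x‖] with R h1 h2
  exact P.abs_avg_sub_avg_zero_le x h1 h2

/-- Averages at scale `s` differ by `O(|x - x'| / s)`: the difference vanishes as `s → ∞`, and its
derivative in `s` is `O(|x - x'| / s²)`. -/
lemma abs_avg_sub_le (P : IsPotential v g C₀) (x x' : R2) {s : ℝ} (hs : 0 < s) :
    |avg v x s - avg v x' s| ≤ 6 * tot g * ‖x - x'‖ / s := by
  set K := 6 * tot g * ‖x - x'‖ with hK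
  have hd : ∀ t, 0 < t → |mass g x t / t - mass g x' t / t| ≤ K / t ^ 2 := by
    intro t ht
    have := P.abs_mass_sub_le x x' ht
    rw [← sub_div, abs_div, abs_of_pos ht, div_le_iff₀ ht]
    refine this.trans (le_of_eq ?_)
    rw [hK]
    field_simp
  have hlim : Tendsto (fun R => avg v x R - avg v x' R) atTop (nhds 0) := by
    have := (P.tendsto_avg_sub_avg_zero x).sub (P.tendsto_avg_sub_avg_zero x')
    simpa using this
  have hlimK : Tendsto (fun R : ℝ => K / R) atTop (nhds 0) := by
    simpa [div_eq_mul_inv] using (tendsto_inv_atTop_zero (𝕜 := ℝ)).const_mul K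
  have hcK : ∀ b, ContinuousOn (fun t : ℝ => K / t) (Icc s b) := fun b =>
    continuousOn_const.div continuousOn_id fun t ht => (hs.trans_le ht.1).ne'
  have hdK : ∀ t, 0 < t → HasDerivAt (fun t : ℝ => K / t) (-K / t ^ 2) t := fun t ht => by
    simpa [div_eq_mul_inv] using (hasDerivAt_inv ht.ne').const_mul K
  rw [abs_le]
  constructor
  · have : ∀ b, s ≤ b →
        avg v x b - avg v x' b + K / b ≤ avg v x s - avg v x' s + K / s := by
      intro b hb
      have := le_of_hasDerivAt_nonneg (f := fun t => -(avg v x t - avg v x' t + K / t)) hb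
        ((((P.continuous_avg x).sub (P.continuous_avg x')).continuousOn).add (hcK b)).neg
        (fun t ht => (((P.hasDerivAt x (hs.trans ht.1)).sub
          (P.hasDerivAt x' (hs.trans ht.1))).add (hdK t (hs.trans ht.1))).neg)
        (fun t ht => by
          have := (abs_le.1 (hd t (hs.trans ht.1))).1
          rw [neg_div]
          linarith)
      linarith
    have h := le_of_tendsto (hlim.add hlimK) (eventually_atTop.2 ⟨s, this⟩)
    linarith
  · have : ∀ b, s ≤ b →
        avg v x s - avg v x' s - K / s ≤ avg v x b - avg v x' b - K / b := by
      intro b hb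
      have := le_of_hasDerivAt_nonneg (f := fun t => avg v x t - avg v x' t - K / t) hb
        ((((P.continuous_avg x).sub (P.continuous_avg x')).continuousOn).sub (hcK b))
        (fun t ht => (((P.hasDerivAt x (hs.trans ht.1)).sub
          (P.hasDerivAt x' (hs.trans ht.1))).sub (hdK t (hs.trans ht.1))))
        (fun t ht => by
          have := (abs_le.1 (hd t (hs.trans ht.1))).2
          rw [neg_div]
          linarith)
      exact this
    have h := ge_of_tendsto (hlim.sub hlimK) (eventually_atTop.2 ⟨s, this⟩)
    linarith

end IsPotential

/-! ### Pointwise consequences -/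

namespace IsPotential

variable {v g : R2 → ℝ} {C₀ : ℝ}

/-- The potential is uniformly continuous on the whole plane: averages at a small fixed scale `s`
are within `s² / 2` of it and Lipschitz in their centre. -/
lemma uniform_modulus (P : IsPotential v g C₀) {ε : ℝ} (hε : 0 < ε) :
    ∃ h > 0, ∀ x x' : R2, ‖x - x'‖ ≤ h → |v x - v x'| ≤ ε := by
  have hM := P.tot_nonneg
  set s := min 1 ε with hs
  have hs0 : 0 < s := lt_min one_pos hε
  have hs2 : s ^ 2 ≤ ε := by
    have h1 : s ≤ 1 := min_le_left _ _
    have h2 : s ≤ ε := min_le_right _ _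
    nlinarith
  have key : ∀ x x' : R2, ‖x - x'‖ ≤ ε * s / (2 * (6 * tot g + 1)) → v x - v x' ≤ ε := by
    intro x x' h
    have h1 := P.le_avg_add_sq x hs0.le (fun z _ => P.le_one z)
    have h2 := P.avg_anti x' le_rfl hs0.le
    rw [avg_zero] at h2
    have h3 := (abs_le.1 (P.abs_avg_sub_le x x' hs0)).2
    have h4 : 6 * tot g * ‖x - x'‖ / s ≤ ε / 2 := by
      rw [le_div_iff₀ (by positivity)] at h
      rw [div_le_iff₀ hs0]
      nlinarith [norm_nonneg (x - x')]
    linarith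
  refine ⟨ε * s / (2 * (6 * tot g + 1)), by positivity, fun x x' h => abs_le.2 ⟨?_, key x x' h⟩⟩
  have := key x' x (by rwa [norm_sub_rev])
  linarith

lemma exists_mass_ge (P : IsPotential v g C₀) {ε : ℝ} (hε : 0 < ε) :
    ∃ s₀ ≥ 1, ∀ s ≥ s₀, tot g - ε ≤ mass g 0 s := by
  obtain ⟨s₀, h⟩ := eventually_atTop.1
    (P.tendsto_mass.eventually (Ioi_mem_nhds (sub_lt_self (tot g) hε)))
  exact ⟨max 1 s₀, le_max_left _ _, fun s hs => (h s ((le_max_right _ _).trans hs)).le⟩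

/-- The mass in a disk of fixed radius vanishes as its centre goes to infinity. -/
lemma exists_mass_le (P : IsPotential v g C₀) {h ε : ℝ} (hh : 0 < h) (hε : 0 < ε) :
    ∃ R, ∀ x : R2, R ≤ ‖x‖ → mass g x h ≤ ε := by
  obtain ⟨s₀, h1, hs₀⟩ := P.exists_mass_ge hε
  refine ⟨2 * max s₀ h, fun x hx => ?_⟩
  have h2 := P.mass_add_mass_le (lt_max_of_lt_right hh : 0 < max s₀ h) hx
  have h3 := hs₀ (max s₀ h) (le_max_left _ _)
  have h4 := P.mass_mono x hh (le_max_right s₀ h)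
  linarith

/-- The average `avg v x ‖x‖` lies below `v x`, and recentring it at the origin costs `O(1)` at
this scale. -/
lemma exists_lower (P : IsPotential v g C₀) :
    ∃ C, ∀ x : R2, 1 ≤ ‖x‖ → -C ≤ v x + tot g * Real.log ‖x‖ := by
  refine ⟨6 * tot g - avg v 0 1, fun x hx => ?_⟩
  have hr : 0 < ‖x‖ := by linarith
  have h1 := P.avg_anti x le_rfl hr.le
  rw [avg_zero] at h1
  have h2 := (abs_le.1 (P.abs_avg_sub_le x 0 hr)).1
  rw [sub_zero, mul_div_cancel_right₀ _ hr.ne'] at h2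
  have h3 := P.avg_le_add_log 0 one_pos hx (fun s _ => P.mass_le_tot 0 s)
  rw [Real.log_one] at h3
  linarith

/-- The average over the disk of radius `|x| / 2` about `x` is compared with the one over the disk
of radius `|x|` about the origin. -/
lemma avg_half_le (P : IsPotential v g C₀) {x : R2} (hx : 0 < ‖x‖) :
    avg v x (‖x‖ / 2) ≤ avg v 0 ‖x‖ + tot g * Real.log 2 + 6 * tot g := by
  have h1 := P.avg_le_add_log x (half_pos hx) (by linarith : ‖x‖ / 2 ≤ ‖x‖)
    (fun s _ => P.mass_le_tot x s)
  rw [Real.log_div hx.ne' two_ne_zero] at h1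
  have h2 := (abs_le.1 (P.abs_avg_sub_le x 0 hx)).2
  rw [sub_zero, mul_div_cancel_right₀ _ hx.ne'] at h2
  linarith

/-- A disk about `x` that stays off a large disk about the origin carries mass at most `ε`, so
passing from `v x` to the average at scale `‖x‖ / 2` loses at most `ε log ‖x‖ + O(1)`; the average
about the origin supplies the other `ε`. -/
lemma exists_upper (P : IsPotential v g C₀) {ε : ℝ} (hε : 0 < ε) :
    ∃ R C, ∀ x : R2, R ≤ ‖x‖ → v x ≤ -(tot g - 2 * ε) * Real.log ‖x‖ + C := by
  obtain ⟨s₀, hs1, hs₀⟩ := P.exists_mass_ge hε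
  have hpos : 0 < s₀ := by linarith
  refine ⟨2 * s₀, 1 * s₀ ^ 2 / 2 - ε * Real.log 2 - ε * Real.log s₀ + tot g * Real.log 2 +
    6 * tot g + avg v 0 s₀ + (tot g - ε) * Real.log s₀, fun x hx => ?_⟩
  have hr : 0 < ‖x‖ := by linarith
  have h1 := P.le_avg_add_sq x hpos.le (fun z _ => P.le_one z)
  have h2 := P.avg_le_add_log x hpos (by linarith : s₀ ≤ ‖x‖ / 2) (K := ε) (fun s hs => by
    have h3 := P.mass_add_mass_le (x := x) (hpos.trans hs.1) (by linarith [hs.2])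
    have h4 := hs₀ s hs.1.le
    linarith)
  rw [Real.log_div hr.ne' two_ne_zero] at h2
  have h3 := P.avg_half_le hr
  have h4 := P.avg_add_log_le 0 hpos (by linarith : s₀ ≤ ‖x‖) (fun s hs => hs₀ s hs.1.le)
  linarith

/-- A finite moment of positive order gives a rate for the convergence of the mass. -/
lemma tot_sub_mass_le (P : IsPotential v g C₀) {α : ℝ} (hα : 0 < α) (hα2 : α ≤ 2)
    (hI : Integrable fun z : R2 => ‖z‖ ^ α * g z) {s : ℝ} (hs : 0 < s) :
    tot g - mass g 0 s ≤ (3 / (2 * π) * ∫ z : R2, ‖z‖ ^ α * g z) * s ^ (-α) := by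
  rw [tot, mass, ← mul_sub, ← integral_sub P.integrable (P.integrable_mass 0 s)]
  have h : ∫ z, (g z - cone (s⁻¹ • (z - 0)) ^ 3 * g z) ≤
      ∫ z : R2, 3 * s ^ (-α) * (‖z‖ ^ α * g z) := by
    refine integral_mono (P.integrable.sub (P.integrable_mass 0 s)) (hI.const_mul _) fun z => ?_
    have e : s ^ (-α) * ‖z‖ ^ α = (‖z‖ / s) ^ α := by
      rw [Real.div_rpow (norm_nonneg z) hs.le, Real.rpow_neg hs.le]
      field_simp
    have hn : ‖s⁻¹ • z‖ = ‖z‖ / s := by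
      rw [norm_smul, Real.norm_of_nonneg (by positivity)]; field_simp
    have hk : 1 - cone (s⁻¹ • z) ^ 3 ≤ 3 * (‖z‖ / s) ^ α := by
      have ht : 0 ≤ ‖z‖ / s := by positivity
      have hc0 := cone_nonneg (s⁻¹ • z)
      have hc1 := cone_le_one (s⁻¹ • z)
      rcases le_total (‖z‖ / s) 1 with h1 | h1
      · have h2 : (‖z‖ / s) ^ 2 ≤ (‖z‖ / s) ^ α := by
          rcases ht.eq_or_lt with h0 | h0
          · rw [← h0, Real.zero_rpow hα.ne']; simp
          · have := Real.rpow_le_rpow_of_exponent_ge h0 h1 hα2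
            rwa [Real.rpow_two] at this
        have h3 : 1 - (‖z‖ / s) ^ 2 ≤ cone (s⁻¹ • z) := by
          rw [← hn]; exact le_max_right _ _
        nlinarith [mul_nonneg hc0 (sub_nonneg.2 hc1),
          mul_nonneg (mul_nonneg hc0 hc0) (sub_nonneg.2 hc1)]
      · have h2 : 1 ≤ (‖z‖ / s) ^ α := Real.one_le_rpow h1 hα.le
        have := pow_nonneg hc0 3
        linarith
    calc g z - cone (s⁻¹ • (z - 0)) ^ 3 * g z = (1 - cone (s⁻¹ • z) ^ 3) * g z := by
          rw [sub_zero]; ring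
      _ ≤ 3 * (‖z‖ / s) ^ α * g z := mul_le_mul_of_nonneg_right hk (P.nonneg z)
      _ = _ := by rw [← e]; ring
  rw [integral_const_mul] at h
  calc 1 / (2 * π) * ∫ z, (g z - cone (s⁻¹ • (z - 0)) ^ 3 * g z)
      ≤ 1 / (2 * π) * (3 * s ^ (-α) * ∫ z : R2, ‖z‖ ^ α * g z) := by gcongr
    _ = _ := by ring

/-- With decay `g = O(‖x‖⁻²)` the passage from `v x` to its average at scale `‖x‖ / 2` costs only
`O(1)`, and with a finite moment the mass deficit is integrable against `ds / s`. -/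
lemma exists_upper_of_decay (P : IsPotential v g C₀) {α B R₀ : ℝ} (hα : 0 < α) (hα2 : α ≤ 2)
    (hI : Integrable fun z : R2 => ‖z‖ ^ α * g z) (hR₀ : 1 ≤ R₀)
    (hB : ∀ z : R2, R₀ ≤ ‖z‖ → g z ≤ B / ‖z‖ ^ 2) :
    ∃ R C, ∀ x : R2, R ≤ ‖x‖ → v x + tot g * Real.log ‖x‖ ≤ C := by
  have hmoment := fun s (hs : 0 < s) => P.tot_sub_mass_le hα hα2 hI hs
  have hDnn : 0 ≤ 3 / (2 * π) * ∫ z : R2, ‖z‖ ^ α * g z := mul_nonneg (by positivity)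
    (integral_nonneg fun z => mul_nonneg (Real.rpow_nonneg (norm_nonneg z) _) (P.nonneg z))
  generalize 3 / (2 * π) * ∫ z : R2, ‖z‖ ^ α * g z = D at hmoment hDnn
  refine ⟨2 * R₀, |B| / 2 + tot g * Real.log 2 + 6 * tot g + avg v 0 1 + D / α, fun x hx => ?_⟩
  have hr : 0 < ‖x‖ := by linarith
  have h1 := P.le_avg_add_sq x (half_pos hr).le (B := |B| / (‖x‖ / 2) ^ 2) (fun z hz => by
    have hz' : ‖x‖ / 2 ≤ ‖z‖ := by
      have := norm_sub_norm_le x z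
      rw [norm_sub_rev] at this
      linarith
    refine (hB z (by linarith)).trans ?_
    have h0 : 0 < ‖x‖ / 2 := half_pos hr
    gcongr
    exact le_abs_self B)
  rw [div_mul_cancel₀ _ (by positivity)] at h1
  have h2 := P.avg_half_le hr
  have hder : ∀ s : ℝ, 0 < s → HasDerivAt (fun s : ℝ => D / α * s ^ (-α))
      (-(D * s ^ (-α)) / s) s := fun s hs => by
    have := (Real.hasDerivAt_rpow_const (p := -α) (Or.inl hs.ne')).const_mul (D / α)
    refine this.congr_deriv ?_
    rw [Real.rpow_sub_one hs.ne']
    field_simp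
  have hx1 : 1 ≤ ‖x‖ := by linarith
  -- the correction term makes `s ↦ avg v 0 s + tot g * log s` nonincreasing
  have h3 := le_of_hasDerivAt_nonneg
    (f := fun s => -(avg v 0 s + tot g * Real.log s + D / α * s ^ (-α))) hx1
    (((P.continuous_avg 0).continuousOn.add (continuousOn_const.mul
      (Real.continuousOn_log.mono fun s hs => (one_pos.trans_le hs.1).ne'))).add
      (fun s hs => (hder s (one_pos.trans_le hs.1)).continuousAt.continuousWithinAt)).neg
    (fun s hs => (((P.hasDerivAt 0 (one_pos.trans hs.1)).add
      ((Real.hasDerivAt_log (one_pos.trans hs.1).ne').const_mul (tot g))).add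
        (hder s (one_pos.trans hs.1))).neg)
    (fun s hs => by
      have hs0 : 0 < s := one_pos.trans hs.1
      have h4 := hmoment s hs0
      have e : -(-(mass g 0 s / s) + tot g * s⁻¹ + -(D * s ^ (-α)) / s) =
        (D * s ^ (-α) - (tot g - mass g 0 s)) / s := by field_simp; ring
      rw [e]
      exact div_nonneg (by linarith) hs0.le)
  have hD0 : 0 ≤ D / α * ‖x‖ ^ (-α) :=
    mul_nonneg (div_nonneg hDnn hα.le) (Real.rpow_nonneg hr.le _)
  rw [Real.log_one, Real.one_rpow] at h3
  linarith

end IsPotential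

/-! ### Upper bound for the vortex function -/

lemma lap_congr {f h : R2 → ℝ} {x : R2} (hfh : f =ᶠ[nhds x] h) : lap f x = lap h x := by
  unfold lap
  refine Finset.sum_congr rfl fun i _ => ?_
  have : (fun y => fderiv ℝ f y (EuclideanSpace.single i 1)) =ᶠ[nhds x]
      fun y => fderiv ℝ h y (EuclideanSpace.single i 1) :=
    (Filter.EventuallyEq.fderiv (𝕜 := ℝ) hfh).mono fun y hy => by simp only [hy]
  rw [this.fderiv_eq]

lemma differentiableAt_fderiv_apply {f : R2 → ℝ} {x : R2} (hf : ContDiffAt ℝ 2 f x) (e : R2) :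
    DifferentiableAt ℝ (fun y => fderiv ℝ f y e) x :=
  ((hf.fderiv_right (m := 1) (by norm_num)).differentiableAt (by norm_num)).clm_apply
    (differentiableAt_const e)

lemma eventually_differentiableAt {f : R2 → ℝ} {x : R2} (hf : ContDiffAt ℝ 2 f x) :
    ∀ᶠ y in nhds x, DifferentiableAt ℝ f y :=
  (hf.eventually (by simp)).mono fun y hy => hy.differentiableAt (by norm_num)

lemma lap_add {f h : R2 → ℝ} {x : R2} (hf : ContDiffAt ℝ 2 f x) (hh : ContDiffAt ℝ 2 h x) :
    lap (fun y => f y + h y) x = lap f x + lap h x := by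
  unfold lap
  rw [← Finset.sum_add_distrib]
  refine Finset.sum_congr rfl fun i _ => ?_
  have : (fun y => fderiv ℝ (fun y => f y + h y) y (EuclideanSpace.single i 1)) =ᶠ[nhds x]
      fun y => fderiv ℝ f y (EuclideanSpace.single i 1) +
        fderiv ℝ h y (EuclideanSpace.single i 1) := by
    filter_upwards [eventually_differentiableAt hf, eventually_differentiableAt hh] with y h1 h2
    rw [fderiv_fun_add h1 h2]; rfl
  rw [this.fderiv_eq, fderiv_fun_add (differentiableAt_fderiv_apply hf _)
    (differentiableAt_fderiv_apply hh _)]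
  rfl

/-- The Laplacian of a function of the squared distance to `a`. -/
lemma lap_radial {F F' : ℝ → ℝ} {F'' : ℝ} {a x : R2}
    (hF : ∀ᶠ t in nhds (‖x - a‖ ^ 2), HasDerivAt F (F' t) t)
    (hF' : HasDerivAt F' F'' (‖x - a‖ ^ 2)) :
    lap (fun y => F (‖y - a‖ ^ 2)) x = 4 * ‖x - a‖ ^ 2 * F'' + 4 * F' (‖x - a‖ ^ 2) := by
  have hsq : ∀ y : R2, HasFDerivAt (fun y : R2 => ‖y - a‖ ^ 2) (2 • innerSL ℝ (y - a)) y :=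
    fun y => by simpa using (hasFDerivAt_id y).sub_const a |>.norm_sq
  have hcont : Tendsto (fun y : R2 => ‖y - a‖ ^ 2) (nhds x) (nhds (‖x - a‖ ^ 2)) :=
    (hsq x).continuousAt
  have h1 : ∀ i : Fin 2, (fun y => fderiv ℝ (fun y => F (‖y - a‖ ^ 2)) y
      (EuclideanSpace.single i 1)) =ᶠ[nhds x] fun y => F' (‖y - a‖ ^ 2) * (2 * (y i - a i)) := by
    intro i
    filter_upwards [hcont.eventually hF] with y hy
    have := (hy.comp_hasFDerivAt y (hsq y)).fderiv
    simp only [Function.comp_def] at this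
    rw [this]
    simp [EuclideanSpace.inner_single_right]
  have h2 : ∀ i : Fin 2, fderiv ℝ (fun y : R2 => F' (‖y - a‖ ^ 2) * (2 * (y i - a i))) x
      (EuclideanSpace.single i 1) = F'' * (2 * (x i - a i)) ^ 2 + 2 * F' (‖x - a‖ ^ 2) := by
    intro i
    have h3 := hF'.comp_hasFDerivAt x (hsq x)
    have h4 : HasFDerivAt (fun y : R2 => 2 * (y i - a i))
        ((2 : ℝ) • (EuclideanSpace.proj i : R2 →L[ℝ] ℝ)) x :=
      (((EuclideanSpace.proj i : R2 →L[ℝ] ℝ).hasFDerivAt (x := x)).sub_const (a i)).const_mul 2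
    have h5 := (h3.mul h4).fderiv
    simp only [Function.comp_def] at h5
    have h6 : (fun y : R2 => F' (‖y - a‖ ^ 2) * (2 * (y i - a i))) =
      (fun y : R2 => F' (‖y - a‖ ^ 2)) * fun y : R2 => 2 * (y i - a i) := rfl
    rw [h6, h5]
    simp [EuclideanSpace.inner_single_right]
    ring
  have h7 : ‖x - a‖ ^ 2 = (x 0 - a 0) ^ 2 + (x 1 - a 1) ^ 2 := by
    rw [EuclideanSpace.norm_sq_eq]; simp
  unfold lap
  simp only [Fin.sum_univ_two]
  rw [(h1 0).fderiv_eq, (h1 1).fderiv_eq, h2, h2]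
  generalize F' (‖x - a‖ ^ 2) = c
  rw [h7]
  ring

lemma lap_nonpos_of_isLocalMax {f : R2 → ℝ} {x : R2} (hf : ContDiffAt ℝ 2 f x)
    (hmax : IsLocalMax f x) : lap f x ≤ 0 := by
  unfold lap
  refine Finset.sum_nonpos fun i _ => ?_
  set e : R2 := EuclideanSpace.single i 1
  by_contra! hpos
  set φ : ℝ → ℝ := fun t => f (x + t • e) with hφ
  have hl : ∀ t, HasDerivAt (fun t : ℝ => x + t • e) e t := fun t => by
    simpa using ((hasDerivAt_id t).smul_const e).const_add x
  have hl0 : Tendsto (fun t : ℝ => x + t • e) (nhds 0) (nhds x) := by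
    simpa using (hl 0).continuousAt.tendsto
  have h1 : deriv φ =ᶠ[nhds 0] fun t => fderiv ℝ f (x + t • e) e := by
    filter_upwards [hl0.eventually (eventually_differentiableAt hf)] with t ht
    exact (ht.hasFDerivAt.comp_hasDerivAt t (hl t)).deriv
  have h2 : deriv (deriv φ) 0 = fderiv ℝ (fun y => fderiv ℝ f y e) x e := by
    rw [h1.deriv_eq]
    have hd : HasFDerivAt (fun y => fderiv ℝ f y e) (fderiv ℝ (fun y => fderiv ℝ f y e) x)
        (x + (0 : ℝ) • e) := by
      simpa using (differentiableAt_fderiv_apply hf e).hasFDerivAt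
    exact (hd.comp_hasDerivAt 0 (hl 0)).deriv
  have hmax' : IsLocalMax φ 0 := by
    have := hl0.eventually hmax
    simpa [IsLocalMax, IsMaxFilter, hφ] using this
  have hc : ContinuousAt φ 0 := by
    have : ContinuousAt f (x + (0 : ℝ) • e) := by simpa using hf.continuousAt
    exact this.comp (f := fun t : ℝ => x + t • e) (hl 0).continuousAt
  -- a positive second derivative would make `0` a local minimum too, so `φ` would be constant
  have hmin := isLocalMin_of_deriv_deriv_pos (by rw [h2]; exact hpos) hmax'.deriv_eq_zero hc
  have hconst : φ =ᶠ[nhds 0] fun _ => φ 0 := by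
    filter_upwards [hmin, hmax'] with t h3 h4 using le_antisymm h4 h3
  have h5 : deriv φ =ᶠ[nhds 0] fun _ => 0 := by
    have := hconst.deriv
    simpa using this
  rw [← h2, h5.deriv_eq] at hpos
  simp at hpos

lemma contDiffAt_log_norm (m : ℕ) {x : R2} (hx : x ≠ 0 ∨ m = 0) :
    ContDiffAt ℝ 2 (fun y : R2 => 2 * (m : ℝ) * Real.log ‖y‖) x := by
  rcases hx with hx | rfl
  · exact contDiffAt_const.mul ((contDiffAt_norm ℝ hx).log (norm_ne_zero_iff.2 hx))
  · simpa using contDiffAt_const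

lemma lap_log_norm (m : ℕ) {x : R2} (hx : x ≠ 0 ∨ m = 0) :
    lap (fun y : R2 => 2 * (m : ℝ) * Real.log ‖y‖) x = 0 := by
  rcases hx with hx | rfl
  · have e : (fun y : R2 => 2 * (m : ℝ) * Real.log ‖y‖) =
        fun y : R2 => (fun t => (m : ℝ) * Real.log t) (‖y - 0‖ ^ 2) := by
      ext y
      simp only [sub_zero, Real.log_pow]
      push_cast; ring
    have hpos : 0 < ‖x - 0‖ ^ 2 := by
      rw [sub_zero]; have := norm_pos_iff.2 hx; positivity
    have h := lap_radial (F := fun t => (m : ℝ) * Real.log t) (F' := fun t => (m : ℝ) * t⁻¹)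
      (F'' := (m : ℝ) * -((‖x - 0‖ ^ 2) ^ 2)⁻¹) (a := 0) (x := x)
      (by filter_upwards [Ioi_mem_nhds hpos] with t ht
          exact (Real.hasDerivAt_log (ne_of_gt ht)).const_mul _)
      ((hasDerivAt_inv hpos.ne').const_mul _)
    rw [e]
    refine h.trans ?_
    field_simp
    ring
  · simp [lap]

/-- The function `e^w`, written through the regular part `v` of `w` so that it is continuous at
the origin (with value `1 · e^(v 0)` there when `m = 0`). -/
def dens (m : ℕ) (v : R2 → ℝ) (x : R2) : ℝ := ‖x‖ ^ (2 * m) * Real.exp (v x)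

lemma dens_nonneg (m : ℕ) (v : R2 → ℝ) (x : R2) : 0 ≤ dens m v x := by unfold dens; positivity

lemma continuous_dens (m : ℕ) {v : R2 → ℝ} (hv : Continuous v) : Continuous (dens m v) := by
  unfold dens; fun_prop

lemma log_dens {m : ℕ} {v : R2 → ℝ} {x : R2} (hx : x ≠ 0 ∨ m = 0) :
    Real.log (dens m v x) = v x + 2 * (m : ℝ) * Real.log ‖x‖ := by
  have h : ‖x‖ ^ (2 * m) ≠ 0 := by
    rcases hx with hx | rfl
    · exact pow_ne_zero _ (norm_ne_zero_iff.2 hx)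
    · simp
  rw [dens, Real.log_mul h (Real.exp_pos _).ne', Real.log_exp, Real.log_pow]
  push_cast; ring

/-- A solution satisfies `e^w ≤ 1`. On the disk of radius `R` about `x₀` the function
`-2 log (R² - |x - x₀|²)` is a barrier that blows up at the boundary; comparing at an interior
maximum bounds `e^w` at the centre by `1 + O(1 / R²)`. -/
lemma dens_le_one {m : ℕ} {v : R2 → ℝ} (hv : ContDiff ℝ 2 v)
    (heq : ∀ x, lap v x = -(dens m v x * (1 - dens m v x))) (x₀ : R2) : dens m v x₀ ≤ 1 := by
  by_contra! h1
  set E := dens m v with hE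
  have hprod : 0 < (E x₀ - 1) * E x₀ := mul_pos (by linarith) (by linarith)
  set R := 8 / ((E x₀ - 1) * E x₀) + 1 with hR
  have hR1 : 1 < R := by rw [hR]; have : 0 < 8 / ((E x₀ - 1) * E x₀) := by positivity
                         linarith
  have hR8 : 8 < (E x₀ - 1) * E x₀ * R := by
    rw [hR, mul_add, mul_div_cancel₀ _ hprod.ne']; linarith
  set Q : R2 → ℝ := fun z => R ^ 2 - ‖z - x₀‖ ^ 2 with hQ
  have hEc : Continuous E := continuous_dens m hv.continuous
  have hQc : Continuous Q := by fun_prop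
  obtain ⟨z, hz, hmax⟩ := (isCompact_closedBall x₀ R).exists_isMaxOn
    ⟨x₀, mem_closedBall_self (by linarith)⟩ (f := fun z => E z * Q z ^ 2) (by fun_prop)
  have hmax0 : E x₀ * (R ^ 2) ^ 2 ≤ E z * Q z ^ 2 := by
    have : E x₀ * Q x₀ ^ 2 ≤ E z * Q z ^ 2 := hmax (mem_closedBall_self (by linarith))
    simpa [hQ] using this
  have hE0 : 0 ≤ E z := dens_nonneg m v z
  have hpos : 0 < E z * Q z ^ 2 := lt_of_lt_of_le (by positivity) hmax0
  have hEz : 0 < E z := hE0.lt_of_ne fun h => by rw [← h] at hpos; simp at hpos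
  have hQ0 : 0 ≤ Q z := by
    rw [mem_closedBall, dist_eq_norm] at hz
    simp only [hQ]
    nlinarith [norm_nonneg (z - x₀)]
  have hQz : 0 < Q z := hQ0.lt_of_ne fun h => by rw [← h] at hpos; simp at hpos
  have hz0 : z ≠ 0 ∨ m = 0 := by
    by_contra! h
    obtain ⟨rfl, hm⟩ := h
    have : E 0 = 0 := by simp [hE, dens, hm]
    linarith
  have hQev : ∀ᶠ y in nhds z, 0 < Q y := hQc.continuousAt.eventually (Ioi_mem_nhds hQz)
  have hEev : ∀ᶠ y in nhds z, 0 < E y := hEc.continuousAt.eventually (Ioi_mem_nhds hEz)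
  have hzev : ∀ᶠ y in nhds z, y ≠ 0 ∨ m = 0 := by
    rcases hz0 with h | h
    · exact (isOpen_ne.mem_nhds h : {y : R2 | y ≠ 0} ∈ nhds z) |> fun h' =>
        Filter.mem_of_superset h' fun y hy => Or.inl hy
    · exact Eventually.of_forall fun _ => Or.inr h
  have hball : closedBall x₀ R ∈ nhds z := by
    filter_upwards [hQev] with y hy
    rw [mem_closedBall, dist_eq_norm]
    simp only [hQ] at hy
    nlinarith [norm_nonneg (y - x₀)]
  set f : R2 → ℝ := fun y => (v y + 2 * (m : ℝ) * Real.log ‖y‖) + 2 * Real.log (Q y) with hf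
  have hflog : ∀ y, 0 < Q y → 0 < E y → (y ≠ 0 ∨ m = 0) → f y = Real.log (E y * Q y ^ 2) := by
    intro y h2 h3 h4
    rw [Real.log_mul h3.ne' (by positivity), Real.log_pow, hE, log_dens h4]
    push_cast; rfl
  have hfmax : IsLocalMax f z := by
    filter_upwards [hQev, hEev, hzev, hball] with y h2 h3 h4 h5
    rw [hflog y h2 h3 h4, hflog z hQz hEz hz0]
    exact Real.log_le_log (by positivity) (hmax h5)
  have hcl := contDiffAt_log_norm m hz0
  have hcQ : ContDiffAt ℝ 2 (fun y => 2 * Real.log (Q y)) z := by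
    have : ContDiff ℝ 2 Q := contDiff_const.sub ((contDiff_id.sub contDiff_const).norm_sq ℝ)
    exact contDiffAt_const.mul (this.contDiffAt.log hQz.ne')
  have hlapQ : lap (fun y => 2 * Real.log (Q y)) z = -(8 * R ^ 2 / Q z ^ 2) := by
    have hpt : ∀ t, 0 < R ^ 2 - t → HasDerivAt (fun t => 2 * Real.log (R ^ 2 - t))
        (-2 * (R ^ 2 - t)⁻¹) t := fun t ht => by
      have := (((hasDerivAt_id t).const_sub (R ^ 2)).log ht.ne').const_mul 2
      refine this.congr_deriv ?_
      simp only [id]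
      field_simp
    have h2 := lap_radial (F := fun t => 2 * Real.log (R ^ 2 - t))
      (F' := fun t => -2 * (R ^ 2 - t)⁻¹) (F'' := -2 * (Q z ^ 2)⁻¹) (a := x₀) (x := z)
      (by
        have hQz' : ‖z - x₀‖ ^ 2 < R ^ 2 := by simpa [hQ] using hQz
        filter_upwards [Iio_mem_nhds hQz'] with t ht
        exact hpt t (sub_pos.2 ht))
      (by
        have := (((hasDerivAt_id (‖z - x₀‖ ^ 2)).const_sub (R ^ 2)).inv hQz.ne').const_mul (-2)
        refine this.congr_deriv ?_
        simp only [id, hQ]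
        field_simp
        )
    have h3 : ‖z - x₀‖ ^ 2 = R ^ 2 - Q z := by simp [hQ]
    rw [h3] at h2
    refine h2.trans ?_
    generalize Q z = q at hQz ⊢
    rw [sub_sub_cancel]
    field_simp
    ring
  have hlap := lap_nonpos_of_isLocalMax ((hv.contDiffAt.add hcl).add hcQ) hfmax
  rw [lap_add (hv.contDiffAt.add hcl) hcQ, lap_add hv.contDiffAt hcl, heq,
    lap_log_norm m hz0, hlapQ] at hlap
  have h2 : E z * (E z - 1) * Q z ^ 2 ≤ 8 * R ^ 2 := by
    have : E z * (E z - 1) ≤ 8 * R ^ 2 / Q z ^ 2 := by linarith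
    rwa [le_div_iff₀ (by positivity)] at this
  have hQR : Q z ^ 2 ≤ (R ^ 2) ^ 2 := by
    refine pow_le_pow_left₀ hQ0 ?_ 2
    simp only [hQ]; nlinarith [sq_nonneg ‖z - x₀‖]
  have h3 : E x₀ ≤ E z := by
    have : E x₀ * (R ^ 2) ^ 2 ≤ E z * (R ^ 2) ^ 2 :=
      hmax0.trans (mul_le_mul_of_nonneg_left hQR hE0)
    exact le_of_mul_le_mul_right this (by positivity)
  have h4 : (E x₀ - 1) * (E x₀ * (R ^ 2) ^ 2) ≤ 8 * R ^ 2 :=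
    calc (E x₀ - 1) * (E x₀ * (R ^ 2) ^ 2) ≤ (E z - 1) * (E z * Q z ^ 2) :=
          mul_le_mul (by linarith) hmax0 (by positivity) (by linarith)
      _ ≤ 8 * R ^ 2 := by linarith
  have h5 : (E x₀ - 1) * E x₀ * R ^ 2 ≤ 8 := by
    have : (E x₀ - 1) * E x₀ * R ^ 2 * R ^ 2 ≤ 8 * R ^ 2 := by linarith
    exact le_of_mul_le_mul_right this (by positivity)
  nlinarith

/-! ### Behaviour at infinity -/

/-- The vortex function `w`, written through its regular part `v`. -/
def vort (m : ℕ) (v : R2 → ℝ) (x : R2) : ℝ := v x + 2 * (m : ℝ) * Real.log ‖x‖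

lemma dens_eq_exp {m : ℕ} {v : R2 → ℝ} {x : R2} (hx : x ≠ 0) :
    dens m v x = Real.exp (vort m v x) := by
  have hpos : 0 < dens m v x := by
    have := norm_pos_iff.2 hx
    unfold dens; positivity
  rw [vort, ← log_dens (Or.inl hx), Real.exp_log hpos]

lemma continuousOn_vort (m : ℕ) {v : R2 → ℝ} (hv : Continuous v) :
    ContinuousOn (vort m v) {x | x ≠ 0} := by
  unfold vort
  exact hv.continuousOn.add (continuousOn_const.mul
    (continuous_norm.continuousOn.log fun x hx => norm_ne_zero_iff.2 hx))

lemma abs_log_norm_sub_le {x z : R2} (hx : 1 < ‖x‖) (hxz : ‖x - z‖ ≤ 1) :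
    |Real.log ‖x‖ - Real.log ‖z‖| ≤ 1 / (‖x‖ - 1) := by
  have h1 : ‖x‖ - ‖z‖ ≤ 1 := (norm_sub_norm_le x z).trans hxz
  have h2 : ‖z‖ - ‖x‖ ≤ 1 := (norm_sub_norm_le z x).trans (by rwa [norm_sub_rev])
  have hz : 0 < ‖z‖ := by linarith
  have hx0 : 0 < ‖x‖ := by linarith
  have key : ∀ a b : ℝ, 0 < a → 0 < b → a - b ≤ 1 → ‖x‖ - 1 ≤ b →
      Real.log a - Real.log b ≤ 1 / (‖x‖ - 1) := by
    intro a b ha hb hab hb'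
    rw [← Real.log_div ha.ne' hb.ne']
    calc Real.log (a / b) ≤ a / b - 1 := Real.log_le_sub_one_of_pos (by positivity)
      _ = (a - b) / b := by field_simp
      _ ≤ 1 / b := by gcongr
      _ ≤ 1 / (‖x‖ - 1) := one_div_le_one_div_of_le (by linarith) hb'
  rw [abs_le]
  constructor
  · linarith [key ‖z‖ ‖x‖ hz hx0 h2 (by linarith)]
  · exact key ‖x‖ ‖z‖ hx0 hz h1 (by linarith)

lemma exp_sub_exp_le {a b : ℝ} (ha : a ≤ 0) : Real.exp a - Real.exp b ≤ |a - b| := by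
  have h1 : Real.exp b = Real.exp a * Real.exp (b - a) := by rw [← Real.exp_add]; congr 1; ring
  have h2 := Real.add_one_le_exp (b - a)
  have h3 := Real.exp_pos a
  have h4 : Real.exp a ≤ 1 := Real.exp_le_one_iff.2 ha
  have h5 : Real.exp a - Real.exp b ≤ Real.exp a * (a - b) := by
    rw [h1]; nlinarith
  calc Real.exp a - Real.exp b ≤ Real.exp a * (a - b) := h5
    _ ≤ Real.exp a * |a - b| := mul_le_mul_of_nonneg_left (le_abs_self _) h3.le
    _ ≤ 1 * |a - b| := mul_le_mul_of_nonneg_right h4 (abs_nonneg _)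
    _ = |a - b| := one_mul _

lemma abs_self_mul_one_sub_le {a b : ℝ} (ha : a ≤ 0) (hb : b ≤ 0) :
    |Real.exp a * (1 - Real.exp a) - Real.exp b * (1 - Real.exp b)| ≤ |a - b| := by
  have h1 : |Real.exp a - Real.exp b| ≤ |a - b| :=
    abs_sub_le_iff.2 ⟨exp_sub_exp_le ha, by rw [abs_sub_comm]; exact exp_sub_exp_le hb⟩
  have e : Real.exp a * (1 - Real.exp a) - Real.exp b * (1 - Real.exp b) =
      (Real.exp a - Real.exp b) * (1 - Real.exp a - Real.exp b) := by ring
  have h2 : |1 - Real.exp a - Real.exp b| ≤ 1 := by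
    have h3 : Real.exp a ≤ 1 := Real.exp_le_one_iff.2 ha
    have h4 : Real.exp b ≤ 1 := Real.exp_le_one_iff.2 hb
    rw [abs_le]
    constructor <;> linarith [Real.exp_pos a, Real.exp_pos b]
  rw [e, abs_mul]
  exact (mul_le_of_le_one_right (abs_nonneg _) h2).trans h1

lemma integral_cone_cube_pos : 0 < ∫ y, cone y ^ 3 :=
  (continuous_cone.pow 3).integral_pos_of_hasCompactSupport_nonneg_nonzero
    (hasCompactSupport_cone_pow (by norm_num)) (fun y => pow_nonneg (cone_nonneg y) 3)
    (x := 0) (by simp [cone])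

section Vortex

variable {m : ℕ} {v : R2 → ℝ} {C₀ : ℝ}

lemma vort_nonpos (hE : ∀ x, dens m v x ≤ 1) {x : R2} (hx : x ≠ 0) : vort m v x ≤ 0 := by
  have := hE x
  rwa [dens_eq_exp hx, Real.exp_le_one_iff] at this

/-- The density `e^w (1 - e^w)` tends to `0` at infinity: it is uniformly continuous there, so a
value bounded below would contribute a definite amount of mass on a disk of fixed radius. -/
lemma exists_density_le (P : IsPotential v (fun x => dens m v x * (1 - dens m v x)) C₀)
    (hE : ∀ x, dens m v x ≤ 1) {ε : ℝ} (hε : 0 < ε) :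
    ∃ R, 1 ≤ R ∧ ∀ x : R2, R ≤ ‖x‖ → dens m v x * (1 - dens m v x) ≤ ε := by
  set g : R2 → ℝ := fun x => dens m v x * (1 - dens m v x) with hg
  obtain ⟨h₀, hh₀, hmod⟩ := P.uniform_modulus (ε := ε / 4) (by positivity)
  set h := min h₀ 1 with hh
  have hhpos : 0 < h := lt_min hh₀ one_pos
  set J := ∫ y, cone y ^ 3 with hJ
  have hJpos : 0 < J := integral_cone_cube_pos
  obtain ⟨R₁, hR₁⟩ := P.exists_mass_le (h := h) (ε := h ^ 2 / (2 * π) * (J * (ε / 2))) hhpos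
    (by positivity)
  refine ⟨max R₁ (2 + 8 * m / ε), ?_, fun x hx => ?_⟩
  · refine le_trans ?_ (le_max_right _ _)
    have : 0 ≤ 8 * (m : ℝ) / ε := by positivity
    linarith
  have hx1 : R₁ ≤ ‖x‖ := (le_max_left _ _).trans hx
  have hx2 : 2 + 8 * m / ε ≤ ‖x‖ := (le_max_right _ _).trans hx
  have hm0 : 0 ≤ 8 * (m : ℝ) / ε := by positivity
  have hdiff : ∀ z : R2, ‖x - z‖ ≤ h → g x - ε / 2 ≤ g z := by
    intro z hz
    have hz1 : ‖x - z‖ ≤ 1 := hz.trans (min_le_right _ _)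
    have hx0 : x ≠ 0 := norm_pos_iff.1 (by linarith)
    have hz0 : z ≠ 0 := norm_pos_iff.1 (by linarith [norm_sub_norm_le x z])
    have h1 := hmod x z (hz.trans (min_le_left _ _))
    have h2 := abs_log_norm_sub_le (by linarith) hz1
    have h3 : 2 * (m : ℝ) * (1 / (‖x‖ - 1)) ≤ ε / 4 := by
      rw [mul_one_div, div_le_iff₀ (by linarith)]
      have : 8 * (m : ℝ) ≤ ε * (‖x‖ - 1) := by
        have h4 : 8 * (m : ℝ) / ε ≤ ‖x‖ - 1 := by linarith
        rw [div_le_iff₀ hε] at h4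
        linarith
      linarith
    have h5 : |vort m v x - vort m v z| ≤ ε / 2 := by
      have e : vort m v x - vort m v z =
          (v x - v z) + 2 * (m : ℝ) * (Real.log ‖x‖ - Real.log ‖z‖) := by unfold vort; ring
      rw [e]
      refine (abs_add_le _ _).trans ?_
      rw [abs_mul, abs_of_nonneg (by positivity : (0 : ℝ) ≤ 2 * m)]
      have : 2 * (m : ℝ) * |Real.log ‖x‖ - Real.log ‖z‖| ≤ 2 * (m : ℝ) * (1 / (‖x‖ - 1)) := by
        gcongr
      linarith
    have h6 := abs_self_mul_one_sub_le (vort_nonpos hE hx0) (vort_nonpos hE hz0)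
    rw [← dens_eq_exp hx0, ← dens_eq_exp hz0] at h6
    have h7 := (le_abs_self _).trans (h6.trans h5)
    simp only [hg]
    linarith
  have hmass := hR₁ x hx1
  rw [mass_eq _ _ hhpos] at hmass
  have hint : J * (g x - ε / 2) ≤ ∫ y, cone y ^ 3 * g (x + h • y) := by
    rw [hJ, ← integral_mul_const]
    have hgc := P.continuous_density
    refine integral_mono ((integrable_cone_pow (by norm_num)).mul_const _)
      (integrable_cone_pow_mul (by norm_num) (by fun_prop)) fun y => ?_
    by_cases hy : 1 ≤ ‖y‖
    · simp [cone_eq_zero hy]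
    · refine mul_le_mul_of_nonneg_left (hdiff _ ?_) (pow_nonneg (cone_nonneg y) 3)
      rw [sub_add_cancel_left, norm_neg, norm_smul, Real.norm_of_nonneg hhpos.le]
      exact mul_le_of_le_one_right hhpos.le (not_le.1 hy).le
  have h8 : J * (g x - ε / 2) ≤ J * (ε / 2) :=
    hint.trans (le_of_mul_le_mul_left hmass (by positivity))
  have h9 : g x - ε / 2 ≤ ε / 2 := le_of_mul_le_mul_left h8 hJpos
  linarith

/-- Far from the origin `w` avoids every compact interval of negative numbers. -/
lemma exists_avoid (P : IsPotential v (fun x => dens m v x * (1 - dens m v x)) C₀)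
    (hE : ∀ x, dens m v x ≤ 1) {K δ : ℝ} (hδ : 0 < δ) :
    ∃ R, 1 ≤ R ∧ ∀ x : R2, R ≤ ‖x‖ → vort m v x < -K ∨ -δ < vort m v x := by
  have hpos : 0 < 1 - Real.exp (-δ) := by
    have : Real.exp (-δ) < 1 := Real.exp_zero ▸ Real.exp_lt_exp.2 (by linarith)
    linarith
  obtain ⟨R, hR1, hR⟩ := exists_density_le P hE
    (ε := Real.exp (-K) * (1 - Real.exp (-δ)) / 2) (by positivity)
  refine ⟨R, hR1, fun x hx => ?_⟩
  have hx0 : x ≠ 0 := norm_pos_iff.1 (by linarith)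
  by_contra! hc
  have h1 := hR x hx
  rw [dens_eq_exp hx0] at h1
  have h2 : Real.exp (-K) * (1 - Real.exp (-δ)) ≤
      Real.exp (vort m v x) * (1 - Real.exp (vort m v x)) := by
    have h3 : Real.exp (-K) ≤ Real.exp (vort m v x) := Real.exp_le_exp.2 hc.1
    have h4 : Real.exp (vort m v x) ≤ Real.exp (-δ) := Real.exp_le_exp.2 hc.2
    exact mul_le_mul h3 (by linarith) hpos.le (Real.exp_pos _).le
  have h5 : 0 < Real.exp (-K) * (1 - Real.exp (-δ)) := by positivity
  linarith

lemma isPreconnected_norm_ge {R : ℝ} (hR : 0 < R) : IsPreconnected {x : R2 | R ≤ ‖x‖} := by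
  have hrank : 1 < Module.rank ℝ R2 := by
    rw [← Module.finrank_eq_rank]; simp
  have h := (isConnected_compl_singleton_of_one_lt_rank hrank (0 : R2)).isPreconnected.image
    (fun x => max 1 (R / ‖x‖) • x) (by
      refine (continuousOn_const.sup (continuousOn_const.div continuous_norm.continuousOn ?_)).smul
        continuousOn_id
      exact fun x hx => norm_ne_zero_iff.2 hx)
  convert h using 1
  ext x
  simp only [mem_ofPred_eq, mem_image, mem_compl_iff, mem_singleton_iff]
  constructor
  · intro hx
    have hx0 : 0 < ‖x‖ := hR.trans_le hx
    refine ⟨x, norm_pos_iff.1 hx0, ?_⟩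
    rw [max_eq_left ((div_le_one hx0).2 hx), one_smul]
  · rintro ⟨y, hy, rfl⟩
    have hy0 : 0 < ‖y‖ := norm_pos_iff.2 hy
    rw [norm_smul, Real.norm_of_nonneg (le_trans zero_le_one (le_max_left _ _))]
    calc R = R / ‖y‖ * ‖y‖ := by field_simp
      _ ≤ _ := mul_le_mul_of_nonneg_right (le_max_right _ _) hy0.le

/-- Near infinity `w` stays on one side of the interval `[-2, -1]`, since the exterior of a disk is
connected. -/
lemma side_of_gap (P : IsPotential v (fun x => dens m v x * (1 - dens m v x)) C₀)
    (hE : ∀ x, dens m v x ≤ 1) :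
    ∃ R, 1 ≤ R ∧ ((∀ x : R2, R ≤ ‖x‖ → vort m v x < -2) ∨
      ∀ x : R2, R ≤ ‖x‖ → -1 < vort m v x) := by
  obtain ⟨R, hR1, hR⟩ := exists_avoid P hE (K := 2) (δ := 1) one_pos
  refine ⟨R, hR1, ?_⟩
  have hcont : ContinuousOn (vort m v) {x : R2 | R ≤ ‖x‖} :=
    (continuousOn_vort m P.smooth.continuous).mono fun x (hx : R ≤ ‖x‖) =>
      norm_pos_iff.1 (by linarith)
  have hconn := (isPreconnected_norm_ge (by linarith : 0 < R)).image _ hcont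
  by_contra! hc
  obtain ⟨⟨x, hx, hx2⟩, y, hy, hy1⟩ := hc
  have hx' : -1 < vort m v x := (hR x hx).resolve_left (not_lt.2 hx2)
  have hy' : vort m v y < -2 := (hR y hy).resolve_right (not_lt.2 hy1)
  obtain ⟨z, hz, hz1⟩ := hconn.ordConnected.out (mem_image_of_mem _ hy) (mem_image_of_mem _ hx)
    (show (-3 / 2 : ℝ) ∈ Icc _ _ from ⟨by linarith, by linarith⟩)
  rcases hR z hz with h | h <;> rw [hz1] at h <;> norm_num at h

lemma tendsto_vort (P : IsPotential v (fun x => dens m v x * (1 - dens m v x)) C₀)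
    (hE : ∀ x, dens m v x ≤ 1) {R : ℝ} (hR : ∀ x : R2, R ≤ ‖x‖ → -1 < vort m v x) :
    Tendsto (vort m v) (cocompact R2) (nhds 0) := by
  rw [Metric.tendsto_nhds]
  intro ε hε
  obtain ⟨R', hR'1, hR'⟩ := exists_avoid P hE (K := 1) hε
  filter_upwards [(tendsto_norm_cocompact_atTop (E := R2)).eventually_ge_atTop (max R R')]
    with x hx
  have h1 := hR x ((le_max_left _ _).trans hx)
  have hx' : R' ≤ ‖x‖ := (le_max_right _ _).trans hx
  have h2 := (hR' x hx').resolve_left (not_lt.2 h1.le)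
  have h3 := vort_nonpos hE (norm_pos_iff.1 (by linarith) : x ≠ 0)
  rw [dist_zero_right, Real.norm_eq_abs, abs_lt]
  exact ⟨h2, by linarith⟩

lemma not_integrable_of_le_inv_sq {g : R2 → ℝ} {c R : ℝ} (hc : 0 < c) (hR : 0 < R)
    (hg : ∀ x : R2, R ≤ ‖x‖ → c * (‖x‖ ^ 2)⁻¹ ≤ g x) : ¬ Integrable g := by
  intro hI
  set f : ℝ → ℝ := (Ici R).indicator fun t => (t ^ 2)⁻¹ with hf
  have hfm : Measurable f := Measurable.indicator (by fun_prop) measurableSet_Ici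
  have h1 : Integrable fun x : R2 => f ‖x‖ := by
    refine (hI.const_mul c⁻¹).mono (hfm.comp measurable_norm).aestronglyMeasurable
      (Eventually.of_forall fun x => ?_)
    by_cases hx : R ≤ ‖x‖
    · rw [hf, indicator_of_mem (mem_Ici.2 hx), Real.norm_of_nonneg (by positivity)]
      refine le_trans ?_ (le_abs_self _)
      rw [le_inv_mul_iff₀ hc]
      exact hg x hx
    · rw [hf, indicator_of_notMem (by simpa using hx), norm_zero]
      exact norm_nonneg _
  rw [integrable_fun_norm_addHaar] at h1
  refine not_integrableOn_Ioi_inv (a := R)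
    ((h1.mono_set (Ioi_subset_Ioi hR.le)).congr_fun (fun t ht => ?_) measurableSet_Ioi)
  have ht0 : 0 < t := hR.trans ht
  simp only [hf, indicator_of_mem (mem_Ici.2 (mem_Ioi.1 ht).le), finrank_euclideanSpace,
    Fintype.card_fin, smul_eq_mul]
  field_simp
  norm_num

/-- If `w` is negative and bounded away from `0` near infinity, then `β > 2`: otherwise the lower
bound `w ≥ -β log ‖x‖ - C` would make the density at least of order `‖x‖⁻²`. -/
lemma two_lt_of_side (P : IsPotential v (fun x => dens m v x * (1 - dens m v x)) C₀)
    {R : ℝ} (hR1 : 1 ≤ R) (hR : ∀ x : R2, R ≤ ‖x‖ → vort m v x < -2) :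
    2 < tot (fun x => dens m v x * (1 - dens m v x)) - 2 * m := by
  obtain ⟨C, hC⟩ := P.exists_lower
  set M := tot (fun x => dens m v x * (1 - dens m v x))
  by_contra! hβ
  refine not_integrable_of_le_inv_sq (c := Real.exp (-C) / 2) (R := R) (by positivity)
    (by linarith) (fun x hx => ?_) P.integrable
  have hx1 : 1 ≤ ‖x‖ := hR1.trans hx
  have hx0 : 0 < ‖x‖ := by linarith
  have hlog : 0 ≤ Real.log ‖x‖ := Real.log_nonneg hx1
  have h1 : -C - 2 * Real.log ‖x‖ ≤ vort m v x := by
    have := hC x hx1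
    have h2 : (M - 2 * m) * Real.log ‖x‖ ≤ 2 * Real.log ‖x‖ := by gcongr
    unfold vort
    linarith
  have h3 : Real.exp (-C) * (‖x‖ ^ 2)⁻¹ ≤ Real.exp (vort m v x) := by
    refine le_trans (le_of_eq ?_) (Real.exp_le_exp.2 h1)
    rw [sub_eq_add_neg, Real.exp_add, Real.exp_neg (2 * _)]
    congr 2
    rw [two_mul, Real.exp_add, Real.exp_log hx0, sq]
  have h4 : Real.exp (vort m v x) ≤ 1 / 2 := by
    have h5 := Real.exp_le_exp.2 (show vort m v x ≤ -1 by linarith [hR x hx])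
    have h6 : Real.exp (-1) ≤ 1 / 2 := by
      rw [Real.exp_neg, one_div]
      exact inv_anti₀ (by norm_num) (by linarith [Real.add_one_le_exp (1 : ℝ)])
    linarith
  rw [dens_eq_exp (norm_pos_iff.1 hx0)]
  nlinarith [Real.exp_pos (vort m v x)]

/-- If `w` is negative and bounded away from `0` near infinity, then it is a logarithm up to a
bounded error. Since `β > 2`, the rough upper bound already gives `g = O(‖x‖^(-2-δ))`, which is
the decay needed for the sharp one. -/
lemma bounded_of_side (P : IsPotential v (fun x => dens m v x * (1 - dens m v x)) C₀)
    {R : ℝ} (hR1 : 1 ≤ R) (hR : ∀ x : R2, R ≤ ‖x‖ → vort m v x < -2) :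
    ∃ C, ∀ x : R2, 1 ≤ ‖x‖ →
      |v x + tot (fun x => dens m v x * (1 - dens m v x)) * Real.log ‖x‖| ≤ C := by
  have hβ := two_lt_of_side P hR1 hR
  set g : R2 → ℝ := fun x => dens m v x * (1 - dens m v x) with hg
  obtain ⟨C₁, hC₁⟩ := P.exists_lower
  set δ := (tot g - 2 * m - 2) / 2 with hδ
  have hδ0 : 0 < δ := by rw [hδ]; linarith
  obtain ⟨R₂, C₂, hC₂⟩ := P.exists_upper (ε := δ / 2) (by positivity)
  have hdecay : ∀ x : R2, max 1 R₂ ≤ ‖x‖ → g x ≤ Real.exp C₂ * ‖x‖ ^ (-(2 + δ)) := by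
    intro x hx
    have hx1 : 1 ≤ ‖x‖ := (le_max_left _ _).trans hx
    have hx0 : 0 < ‖x‖ := by linarith
    have h1 := hC₂ x ((le_max_right _ _).trans hx)
    have h2 : vort m v x ≤ Real.log ‖x‖ * (-(2 + δ)) + C₂ := by
      have e : tot g = 2 * δ + 2 * m + 2 := by rw [hδ]; ring
      rw [e] at h1
      unfold vort
      linarith
    have h3 : g x ≤ Real.exp (vort m v x) := by
      simp only [hg]
      rw [dens_eq_exp (norm_pos_iff.1 hx0)]
      nlinarith [Real.exp_pos (vort m v x)]
    refine h3.trans ((Real.exp_le_exp.2 h2).trans (le_of_eq ?_))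
    rw [Real.exp_add, Real.rpow_def_of_pos hx0, mul_comm]
  set α := min δ 2 / 2 with hα
  have hα0 : 0 < α := by rw [hα]; have := lt_min hδ0 two_pos; linarith
  have hα2 : α ≤ 2 := by rw [hα]; linarith [min_le_right δ 2]
  have hαδ : α < δ := by rw [hα]; linarith [min_le_left δ 2]
  have hI : Integrable fun z : R2 => ‖z‖ ^ α * g z := by
    have hc : Continuous fun z : R2 => ‖z‖ ^ α * g z :=
      (continuous_norm.rpow_const fun _ => Or.inr hα0.le).mul P.continuous_density
    have hr : (Module.finrank ℝ R2 : ℝ) < 2 + δ - α := by simp; linarith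
    refine hc.locallyIntegrable.integrable_of_isBigO_cocompact (f := fun z : R2 => ‖z‖ ^ α * g z)
      (g := fun z : R2 => (1 + ‖z‖) ^ (-(2 + δ - α))) ?_
      ((integrable_one_add_norm hr).integrableAtFilter _)
    refine Asymptotics.IsBigO.of_bound (Real.exp C₂ * 2 ^ (2 + δ - α)) ?_
    filter_upwards [(tendsto_norm_cocompact_atTop (E := R2)).eventually_ge_atTop (max 1 R₂)]
      with z hz
    have hz1 : 1 ≤ ‖z‖ := (le_max_left _ _).trans hz
    have hz0 : 0 < ‖z‖ := by linarith
    rw [Real.norm_of_nonneg (mul_nonneg (by positivity) (P.nonneg z)),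
      Real.norm_of_nonneg (by positivity)]
    calc ‖z‖ ^ α * g z ≤ ‖z‖ ^ α * (Real.exp C₂ * ‖z‖ ^ (-(2 + δ))) := by
          gcongr; exact hdecay z hz
      _ = Real.exp C₂ * ‖z‖ ^ (-(2 + δ - α)) := by
          rw [mul_left_comm, ← Real.rpow_add hz0]; congr 2; ring
      _ ≤ Real.exp C₂ * ((1 + ‖z‖) / 2) ^ (-(2 + δ - α)) := by
          refine mul_le_mul_of_nonneg_left ?_ (Real.exp_pos _).le
          exact Real.rpow_le_rpow_of_nonpos (by positivity) (by linarith) (by linarith)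
      _ = Real.exp C₂ * 2 ^ (2 + δ - α) * (1 + ‖z‖) ^ (-(2 + δ - α)) := by
          rw [Real.div_rpow (by positivity) (by norm_num), Real.rpow_neg (by norm_num : (0:ℝ) ≤ 2),
            div_inv_eq_mul]
          ring
  obtain ⟨R₃, C₃, hC₃⟩ := P.exists_upper_of_decay hα0 hα2 hI (le_max_left 1 R₂)
    (B := Real.exp C₂) fun z hz => by
      have hz1 : 1 ≤ ‖z‖ := (le_max_left _ _).trans hz
      refine (hdecay z hz).trans ?_
      rw [div_eq_mul_inv]
      refine mul_le_mul_of_nonneg_left ?_ (Real.exp_pos _).le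
      rw [← Real.rpow_natCast, ← Real.rpow_neg (norm_nonneg z)]
      exact Real.rpow_le_rpow_of_exponent_le hz1 (by push_cast; linarith)
  refine ⟨max C₁ (max C₃ (C₀ + tot g * Real.log (max 1 R₃))), fun x hx => ?_⟩
  rw [abs_le]
  constructor
  · linarith [hC₁ x hx, le_max_left C₁ (max C₃ (C₀ + tot g * Real.log (max 1 R₃)))]
  refine le_trans ?_ (le_max_right _ _)
  rcases le_total R₃ ‖x‖ with h | h
  · exact (hC₃ x h).trans (le_max_left _ _)
  · refine le_trans ?_ (le_max_right _ _)
    have h1 : Real.log ‖x‖ ≤ Real.log (max 1 R₃) :=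
      Real.log_le_log (by linarith) (h.trans (le_max_right _ _))
    have h2 := mul_le_mul_of_nonneg_left h1 P.tot_nonneg
    linarith [P.le x]

end Vortex

/-- The equation for `w`, transferred to its regular part. It holds at the origin by continuity. -/
lemma lap_regular_eq {m : ℕ} {w v : R2 → ℝ} (hv : ContDiff ℝ 2 v)
    (hwv : ∀ x : R2, x ≠ 0 → w x = v x + 2 * (m : ℝ) * Real.log ‖x‖)
    (heq : ∀ x : R2, x ≠ 0 → lap w x + Real.exp (w x) * (1 - Real.exp (w x)) = 0) (x : R2) :
    lap v x = -(dens m v x * (1 - dens m v x)) := by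
  have hd := continuous_dens m hv.continuous
  have h : EqOn (lap v) (fun x => -(dens m v x * (1 - dens m v x))) {(0 : R2)}ᶜ := by
    intro y hy
    have hy0 : y ≠ 0 := hy
    have h1 : lap w y = lap v y := by
      rw [lap_congr (h := fun z => v z + 2 * (m : ℝ) * Real.log ‖z‖)
        ((isOpen_ne.eventually_mem hy0).mono fun z hz => hwv z hz),
        lap_add hv.contDiffAt (contDiffAt_log_norm m (Or.inl hy0)), lap_log_norm m (Or.inl hy0),
        add_zero]
    have h2 := heq y hy0
    have h3 : dens m v y = Real.exp (w y) := by rw [dens_eq_exp hy0, hwv y hy0, vort]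
    simp only
    rw [h3, ← h1]
    linarith
  exact congrFun ((continuous_lap hv).ext_on (dense_compl_singleton 0) (by fun_prop) h) x

/-- dichotomy for entire Chern–Simons vortices: either `w → 0` at infinity,
or `w(x) + β ln|x|` is bounded for `|x| ≥ 1`, where
`β = −2m + (1/2π)∫ e^w(1 − e^w)`. -/
theorem stmt14 (m : ℕ) (w : R2 → ℝ)
    (hsmooth : ContDiffOn ℝ (⊤ : ℕ∞) w {(0 : R2)}ᶜ)
    (hext : ∃ v : R2 → ℝ, ContDiff ℝ (⊤ : ℕ∞) v ∧
      ∀ x : R2, x ≠ 0 → w x = v x + 2 * (m : ℝ) * Real.log ‖x‖)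
    (heq : ∀ x : R2, x ≠ 0 → lap w x + Real.exp (w x) * (1 - Real.exp (w x)) = 0)
    (hint : Integrable (fun x : R2 => Fw w x * (1 - Fw w x))) :
    Tendsto w (Filter.cocompact R2) (nhds 0) ∨
    (∃ C : ℝ, ∀ x : R2, 1 ≤ ‖x‖ →
      |w x + (-(2 * (m : ℝ)) + (1 / (2 * π)) * ∫ y : R2, Fw w y * (1 - Fw w y)) *
        Real.log ‖x‖| ≤ C) := by
  obtain ⟨v, hv, hwv⟩ := hext
  have hv2 : ContDiff ℝ 2 v := contDiff_infty.1 hv 2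
  have hlap := lap_regular_eq hv2 hwv heq
  have hE := dens_le_one hv2 hlap
  set g : R2 → ℝ := fun x => dens m v x * (1 - dens m v x) with hg
  -- the two densities can differ only at the origin
  have hae : (fun x : R2 => Fw w x * (1 - Fw w x)) =ᵐ[volume] g := by
    filter_upwards [compl_mem_ae_iff.2 (measure_singleton (0 : R2))] with x hx
    have hx0 : x ≠ 0 := hx
    simp only [hg, Fw, if_neg hx0]
    rw [dens_eq_exp hx0, vort, ← hwv x hx0]
  obtain ⟨C, hC⟩ := (isCompact_closedBall (0 : R2) 1).bddAbove_image hv.continuous.continuousOn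
  have P : IsPotential v g (max C 0) :=
    { smooth := hv2
      lap_eq := hlap
      nonneg := fun x => mul_nonneg (dens_nonneg m v x) (sub_nonneg.2 (hE x))
      le_one := fun x => mul_le_one₀ (hE x) (sub_nonneg.2 (hE x))
        (by linarith [dens_nonneg m v x])
      integrable := hint.congr hae
      le := fun x => by
        rcases le_total ‖x‖ 1 with hx | hx
        · exact (hC (mem_image_of_mem v (by simpa using hx))).trans (le_max_left _ _)
        · have h1 := vort_nonpos hE (norm_pos_iff.1 (by linarith) : x ≠ 0)
          have h2 : 0 ≤ 2 * (m : ℝ) * Real.log ‖x‖ :=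
            mul_nonneg (by positivity) (Real.log_nonneg hx)
          unfold vort at h1
          exact le_trans (by linarith) (le_max_right _ _) }
  obtain ⟨R, hR1, hR | hR⟩ := side_of_gap P hE
  · right
    obtain ⟨C', hC'⟩ := bounded_of_side P hR1 hR
    refine ⟨C', fun x hx => ?_⟩
    have hx0 : x ≠ 0 := norm_pos_iff.1 (by linarith)
    have e : w x + (-(2 * (m : ℝ)) + (1 / (2 * π)) * ∫ y : R2, Fw w y * (1 - Fw w y)) *
        Real.log ‖x‖ = v x + tot g * Real.log ‖x‖ := by
      rw [integral_congr_ae hae, hwv x hx0, tot]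
      ring
    rw [e]
    exact hC' x hx
  · left
    refine (tendsto_vort P hE hR).congr' ?_
    filter_upwards [(tendsto_norm_cocompact_atTop (E := R2)).eventually_ge_atTop 1] with x hx
    rw [hwv x (norm_pos_iff.1 (by linarith)), vort]

end
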